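/- Let Q be a finite acyclic quiver, Q' a full connected Dynkin subquiver of Q, β a positive root of Q', and i a vertex with β(i) = 1. For any univariate polynomials f₁,…,f_r ∈ ℚ[x], the iterated left-to-right CoHA product (f₁(ω_{i,1}) ∈ ℋ_β) * (f₂(ω_{i,1}) ∈ ℋ_β) * ⋯ * (f_r(ω_{i,1}) ∈ ℋ_β) ∈ ℋ_{r·β} depends only on the variables ω_{i,1},…,ω_{i,r} and equals the polynomial obtained from the ℋ(A₁)-product f₁(x₁) * f₂(x₁) * ⋯ * f_r(x₁) ∈ ℋ_r(A₁) by substituting x_b ↦ ω_{i,b} for b = 1,…,r. Consequently the subalgebra 𝒜_β of ℋ(Q) generated under * by {f(ω_{i,1}) : f ∈ ℚ[x]} ⊆ ℋ_β is isomorphic as an algebra to ℋ(A₁). -/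

import Mathlib

open MvPolynomial
open scoped Classical

/-- A finite quiver with vertex set `Fin n`: a finite type of arrows together with
head and tail maps. -/
structure FinQuiver (n : ℕ) where
  Arr : Type
  [fintypeArr : Fintype Arr]
  hd : Arr → Fin n
  tl : Arr → Fin n

attribute [instance] FinQuiver.fintypeArr

variable {n : ℕ}

/-- `Q` is acyclic: there is no oriented cycle, i.e. no path
`a₁, …, a_{k+1}` (with `hd aₘ = tl aₘ₊₁`) whose final head equals its initial tail. -/
def FinQuiver.Acyclic (Q : FinQuiver n) : Prop :=
  ∀ (k : ℕ) (c : Fin (k + 1) → Q.Arr),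
    (∀ m : Fin k, Q.hd (c m.castSucc) = Q.tl (c m.succ)) →
    Q.hd (c (Fin.last k)) ≠ Q.tl (c 0)

/-- The Euler form `χ_Q` of the quiver `Q`. -/
def FinQuiver.euler (Q : FinQuiver n) (α β : Fin n → ℕ) : ℤ :=
  ∑ i : Fin n, (α i : ℤ) * β i - ∑ a : Q.Arr, (α (Q.tl a) : ℤ) * β (Q.hd a)

/-- The opposite antisymmetrization `⟨α,β⟩ = χ_Q(β,α) − χ_Q(α,β)`. -/
def FinQuiver.lam (Q : FinQuiver n) (α β : Fin n → ℕ) : ℤ :=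
  Q.euler β α - Q.euler α β

/-- The polynomial ring in the variables `ω_{i,j}`, `i ∈ Q₀`, `j ∈ ℕ` (0-indexed). -/
abbrev PolyQ (n : ℕ) := MvPolynomial (Fin n × ℕ) ℚ

/-- The permutation of the variables at vertex `i` induced by a permutation of `ℕ`. -/
def vertexPerm (i : Fin n) (σ : Equiv.Perm ℕ) : Fin n × ℕ → Fin n × ℕ :=
  fun p => if p.1 = i then (i, σ p.2) else p

/-- `f` is, for each vertex `i`, symmetric in the variables `ω_{i,0},…,ω_{i,γ i − 1}`. -/
def SymmIn (γ : Fin n → ℕ) (f : PolyQ n) : Prop :=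
  ∀ (i : Fin n) (σ : Equiv.Perm ℕ),
    (∀ j : ℕ, σ j ≠ j → j < γ i) → rename (vertexPerm i σ) f = f

lemma vars_smul_subset (c : ℚ) (f : PolyQ n) : (c • f).vars ⊆ f.vars := by
  rw [MvPolynomial.smul_eq_C_mul]
  refine (MvPolynomial.vars_mul _ _).trans ?_
  simp [MvPolynomial.vars_C]

/-- `ℋ_γ`: polynomials using only the variables `ω_{i,j}`, `j < γ i`, which are
symmetric at each vertex.  A `ℚ`-submodule of `PolyQ n`. -/
noncomputable def Hspace (γ : Fin n → ℕ) : Submodule ℚ (PolyQ n) where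
  carrier := {f | (∀ p ∈ f.vars, p.2 < γ p.1) ∧ SymmIn γ f}
  add_mem' := by
    rintro f g ⟨hf1, hf2⟩ ⟨hg1, hg2⟩
    refine ⟨fun p hp => ?_, fun i σ hσ => ?_⟩
    · rcases Finset.mem_union.mp (MvPolynomial.vars_add_subset f g hp) with h | h
      exacts [hf1 p h, hg1 p h]
    · rw [map_add, hf2 i σ hσ, hg2 i σ hσ]
  zero_mem' := by
    refine ⟨fun p hp => ?_, fun i σ hσ => map_zero _⟩
    simp [MvPolynomial.vars_0] at hp
  smul_mem' := by
    rintro c f ⟨hf1, hf2⟩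
    refine ⟨fun p hp => hf1 p (vars_smul_subset c f hp), fun i σ hσ => ?_⟩
    rw [map_smul, hf2 i σ hσ]

/-- Polynomials all of whose variables sit at vertex `i`. -/
noncomputable def onlyVertex (i : Fin n) : Submodule ℚ (PolyQ n) where
  carrier := {f | ∀ p ∈ f.vars, p.1 = i}
  add_mem' := by
    intro f g hf hg p hp
    rcases Finset.mem_union.mp (MvPolynomial.vars_add_subset f g hp) with h | h
    exacts [hf p h, hg p h]
  zero_mem' := by
    intro p hp
    simp [MvPolynomial.vars_0] at hp
  smul_mem' := by
    intro c f hf p hp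
    exact hf p (vars_smul_subset c f hp)

/-- `𝒜_{β,m}`: the subspace of `ℋ_{m·β}` of polynomials depending only on the
variables `ω_{i,0},…,ω_{i,m−1}` at the distinguished vertex `i`. -/
noncomputable def Aspace (β : Fin n → ℕ) (i : Fin n) (m : ℕ) : Submodule ℚ (PolyQ n) :=
  Hspace (fun v => m * β v) ⊓ onlyVertex i

/-- Substitute for the `j`-th variable at vertex `i` the variable `ω_{i,s}` where `s`
is the `j`-th element of `T i` in increasing order. -/
noncomputable def substAlong (T : Fin n → Finset ℕ) : PolyQ n →ₐ[ℚ] PolyQ n :=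
  aeval fun p : Fin n × ℕ => X (p.1, ((T p.1).sort (· ≤ ·)).getD p.2 0)

/-- The index set of the Kontsevich–Soibelman localization sum:
for each vertex, a `γ₁ i`-element subset of `{0,…,γ₁ i + γ₂ i − 1}`. -/
def shuffles (γ₁ γ₂ : Fin n → ℕ) : Finset (Fin n → Finset ℕ) :=
  Fintype.piFinset fun i => (Finset.range (γ₁ i + γ₂ i)).powerset.filter fun s => s.card = γ₁ i

def shuffleCompl (γ₁ γ₂ : Fin n → ℕ) (S : Fin n → Finset ℕ) : Fin n → Finset ℕ :=
  fun i => Finset.range (γ₁ i + γ₂ i) \ S i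

/-- The numerator factor attached to the arrow `a`:
`∏_{j' ∈ S̄_{h a}} ∏_{j ∈ S_{t a}} (ω_{h a, j'} − ω_{t a, j})`. -/
noncomputable def arrowFactor (Q : FinQuiver n) (γ₁ γ₂ : Fin n → ℕ)
    (S : Fin n → Finset ℕ) (a : Q.Arr) : PolyQ n :=
  ∏ j' ∈ shuffleCompl γ₁ γ₂ S (Q.hd a), ∏ j ∈ S (Q.tl a),
    (X (Q.hd a, j') - X (Q.tl a, j))

noncomputable def interactionNum (Q : FinQuiver n) (γ₁ γ₂ : Fin n → ℕ)
    (S : Fin n → Finset ℕ) : PolyQ n :=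
  ∏ a : Q.Arr, arrowFactor Q γ₁ γ₂ S a

noncomputable def interactionDen (γ₁ γ₂ : Fin n → ℕ) (S : Fin n → Finset ℕ) : PolyQ n :=
  ∏ i : Fin n, ∏ j' ∈ shuffleCompl γ₁ γ₂ S i, ∏ j ∈ S i, (X (i, j') - X (i, j))

/-- The Kontsevich–Soibelman localization sum, an element of the field of rational
functions (the fraction field of `PolyQ n`). -/
noncomputable def cohaMulRat (Q : FinQuiver n) (γ₁ γ₂ : Fin n → ℕ) (f₁ f₂ : PolyQ n) :
    FractionRing (PolyQ n) :=
  ∑ S ∈ shuffles γ₁ γ₂,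
    algebraMap (PolyQ n) (FractionRing (PolyQ n))
        (substAlong S f₁ * substAlong (shuffleCompl γ₁ γ₂ S) f₂ * interactionNum Q γ₁ γ₂ S) /
      algebraMap (PolyQ n) (FractionRing (PolyQ n)) (interactionDen γ₁ γ₂ S)

/-- The CoHA product `f₁ * f₂`: the unique polynomial representing the localization
sum (and `0` if the sum were not a polynomial, which never happens). -/
noncomputable def cohaMul (Q : FinQuiver n) (γ₁ γ₂ : Fin n → ℕ) (f₁ f₂ : PolyQ n) : PolyQ n :=
  if h : ∃ P : PolyQ n,
      algebraMap (PolyQ n) (FractionRing (PolyQ n)) P = cohaMulRat Q γ₁ γ₂ f₁ f₂ then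
    h.choose
  else 0

/-- Iterated, left-to-right, CoHA product of a list of dimension-vector/polynomial pairs.
Returns the total dimension vector together with the product. -/
noncomputable def cohaProd (Q : FinQuiver n) :
    List ((Fin n → ℕ) × PolyQ n) → (Fin n → ℕ) × PolyQ n
  | [] => (fun _ => 0, 1)
  | x :: xs => xs.foldl (fun acc y => (acc.1 + y.1, cohaMul Q acc.1 y.1 acc.2 y.2)) x

/-- Left-to-right CoHA product `f 0 * f 1 * ⋯ * f (r−1)` with `f u ∈ ℋ_{γ u}`. -/
noncomputable def cohaProdFin (Q : FinQuiver n) {r : ℕ} (γ : Fin r → Fin n → ℕ)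
    (f : Fin r → PolyQ n) : PolyQ n :=
  (cohaProd Q (List.ofFn fun u => (γ u, f u))).2

/-- The quiver with one vertex and no arrows. -/
def A1 : FinQuiver 1 := { Arr := Empty, hd := Empty.elim, tl := Empty.elim }

/-- `ψ_p = x₁ ^ p ∈ ℋ₁(A₁)`. -/
noncomputable def psi (p : ℕ) : PolyQ 1 := X ((0 : Fin 1), 0) ^ p

def oneDim : Fin 1 → ℕ := fun _ => 1

/-- The simple dimension vector `e_i`. -/
def simpleDim (i : Fin n) : Fin n → ℕ := fun v => if v = i then 1 else 0

/-- A subquiver of `Q`. -/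
structure Subquiver (Q : FinQuiver n) where
  verts : Finset (Fin n)
  arrows : Finset Q.Arr
  hd_mem : ∀ a ∈ arrows, Q.hd a ∈ verts
  tl_mem : ∀ a ∈ arrows, Q.tl a ∈ verts

def Subquiver.Full {Q : FinQuiver n} (Q' : Subquiver Q) : Prop :=
  ∀ a : Q.Arr, Q.hd a ∈ Q'.verts → Q.tl a ∈ Q'.verts → a ∈ Q'.arrows

/-- Adjacency in the underlying undirected graph of a subquiver. -/
def Subquiver.Adj {Q : FinQuiver n} (Q' : Subquiver Q) (x y : Fin n) : Prop :=
  ∃ a ∈ Q'.arrows, (Q.hd a = x ∧ Q.tl a = y) ∨ (Q.hd a = y ∧ Q.tl a = x)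

def Subquiver.Connected {Q : FinQuiver n} (Q' : Subquiver Q) : Prop :=
  ∀ x ∈ Q'.verts, ∀ y ∈ Q'.verts, Relation.ReflTransGen Q'.Adj x y

/-- The Euler form of the subquiver `Q'` (on `ℤ`-valued vectors). -/
def Subquiver.eulerZ {Q : FinQuiver n} (Q' : Subquiver Q) (α β : Fin n → ℤ) : ℤ :=
  ∑ i ∈ Q'.verts, α i * β i - ∑ a ∈ Q'.arrows, α (Q.tl a) * β (Q.hd a)

/-- Positive definiteness of the Tits form of `Q'` on vectors supported on `Q'`. -/
def Subquiver.PosDefTits {Q : FinQuiver n} (Q' : Subquiver Q) : Prop :=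
  ∀ β : Fin n → ℤ, (∀ i, i ∉ Q'.verts → β i = 0) → β ≠ 0 → 0 < Q'.eulerZ β β

/-- A connected full subquiver with positive definite Tits form. -/
def Subquiver.IsDynkin {Q : FinQuiver n} (Q' : Subquiver Q) : Prop :=
  Q'.Connected ∧ Q'.Full ∧ Q'.PosDefTits

/-- A positive root of `Q'`: a nonzero dimension vector supported on `Q'` with
Tits form equal to `1`. -/
def Subquiver.IsPosRoot {Q : FinQuiver n} (Q' : Subquiver Q) (β : Fin n → ℕ) : Prop :=
  (∀ i, i ∉ Q'.verts → β i = 0) ∧ β ≠ 0 ∧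
    Q'.eulerZ (fun i => (β i : ℤ)) (fun i => (β i : ℤ)) = 1

/-- A subquiver regarded as a quiver in its own right (on the ambient vertex set). -/
def Subquiver.toQuiver {Q : FinQuiver n} (Q' : Subquiver Q) : FinQuiver n :=
  { Arr := {a : Q.Arr // a ∈ Q'.arrows}, hd := fun a => Q.hd a.1, tl := fun a => Q.tl a.1 }

/-- An (ordered list) subquiver partition `𝒬• = (Q¹,…,Q^ℓ)`: nonempty connected
subquivers whose vertex sets partition `Q₀`. -/
structure SubqPartition (Q : FinQuiver n) (ℓ : ℕ) where
  part : Fin ℓ → Subquiver Q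
  nonempty' : ∀ j, (part j).verts.Nonempty
  connected' : ∀ j, (part j).Connected
  cover : ∀ i : Fin n, ∃! j, i ∈ (part j).verts

/-- The set `𝒬•₁` of arrows belonging to one of the parts. -/
noncomputable def SubqPartition.arrs {Q : FinQuiver n} {ℓ : ℕ} (P : SubqPartition Q ℓ) : Finset Q.Arr :=
  Finset.univ.biUnion fun j => (P.part j).arrows

/-- The partition is admissible and ordered: every arrow not inside a part goes from a
later part to an earlier part (head before tail). -/
def SubqPartition.Ordered {Q : FinQuiver n} {ℓ : ℕ} (P : SubqPartition Q ℓ) : Prop :=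
  ∀ a : Q.Arr, a ∉ P.arrs → ∀ i j : Fin ℓ,
    Q.hd a ∈ (P.part i).verts → Q.tl a ∈ (P.part j).verts → i < j

/-- Every part is a Dynkin subquiver. -/
def SubqPartition.Dynkin {Q : FinQuiver n} {ℓ : ℕ} (P : SubqPartition Q ℓ) : Prop :=
  ∀ j, (P.part j).IsDynkin

/-- `β : Fin r → (Fin n → ℕ)` is a Reineke-ordered enumeration of `Φ₊(𝒬•)`, with
`blk u` the part to which `β u` belongs: block-monotone, enumerating all positive roots
without repetition, and within each block `u < v → ⟨β u, β v⟩ ≥ 0`. -/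
def IsReinekeOrder {Q : FinQuiver n} {ℓ : ℕ} (P : SubqPartition Q ℓ) {r : ℕ}
    (β : Fin r → Fin n → ℕ) (blk : Fin r → Fin ℓ) : Prop :=
  Monotone blk ∧
  (∀ u, (P.part (blk u)).IsPosRoot (β u)) ∧
  Function.Injective β ∧
  (∀ j (b : Fin n → ℕ), (P.part j).IsPosRoot b → ∃ u, β u = b) ∧
  (∀ u v : Fin r, u < v → blk u = blk v → 0 ≤ Q.lam (β u) (β v))

/-!
Fix the component `T = S i` of a shuffle `S` in the product of `ℋ_{rβ}` and `ℋ_{sβ}`. For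
polynomials in the variables at `i` only, the rest of the localization sum is the sum over all such
`S` of the arrow factors divided by the denominators at the vertices other than `i`, and this sum
is `1`. Indeed it is symmetric at every vertex other than `i`, hence a polynomial; it is homogeneous
of degree `rs (1 - q(β)) = 0`, hence a constant; and the constant is found by letting the variables
at each vertex `v` collide in `r + s` blocks of length `β v`. If `α_b ≤ β` is the dimension vector
of the part of `S` in block `b`, the summand of `S` vanishes to order at least
`∑_b (q(α_b) - α_b(i))`. Since `q` is positive this is positive unless `S` is a union of blocks,
and the one remaining summand is `1`. So the product is that of `ℋ(A₁)`, which is generated by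
`ℋ₁(A₁)` by Lagrange interpolation: a symmetric polynomial in `x₀, …, x_r` with coefficients `c_k`
as a polynomial in `x_r` is the sum of the products `c_k * x₀ ^ (k + r)`.
-/

section DifferencesOfVariables

variable {σ R : Type*} [CommRing R]

lemma irreducible_X_sub_X [IsDomain R] {p q : σ} (hpq : p ≠ q) :
    Irreducible (X p - X q : MvPolynomial σ R) := by
  have hcoeff : coeff (Finsupp.single p 1) (X p - X q : MvPolynomial σ R) = 1 := by
    simp [coeff_X, Finsupp.single_left_inj, hpq.symm]
  refine irreducible_of_totalDegree_eq_one (le_antisymm ?_ ?_) fun x hx => ?_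
  · exact (totalDegree_sub _ _).trans (by simp)
  · simpa using le_totalDegree (mem_support_iff.2 (hcoeff.trans_ne one_ne_zero))
  · exact isUnit_of_dvd_one (hcoeff ▸ hx (Finsupp.single p 1))

lemma not_X_sub_X_dvd_X_sub_X [Nontrivial R] {p q p' q' : σ} (hne : p' ≠ q')
    (hpairs : s(p', q') ≠ s(p, q)) : ¬ ((X p - X q : MvPolynomial σ R) ∣ X p' - X q') := by
  rintro ⟨c, hc⟩
  -- a point with `p = q` at which `p'` and `q'` take different values
  have heval := congrArg (aeval (fun t : σ => if t = p ∨ t = q then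
      (if p' = p ∨ p' = q then (1 : R) else 0) else (if t = p' then 1 else 0))) hc
  simp only [map_sub, map_mul, aeval_X] at heval
  rw [Ne, Sym2.eq_iff] at hpairs
  have := one_ne_zero (α := R)
  grind

lemma X_sub_X_dvd_sub_rename_swap [DecidableEq σ] (p q : σ) (F : MvPolynomial σ R) :
    X p - X q ∣ F - rename (Equiv.swap p q) F := by
  induction F using MvPolynomial.induction_on with
  | C a => simp
  | add F G hF hG =>
    rw [map_add, add_sub_add_comm]
    exact dvd_add hF hG
  | mul_X F t hF =>
    have hX : (X p - X q : MvPolynomial σ R) ∣ X t - X (Equiv.swap p q t) := by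
      rcases eq_or_ne t p with rfl | hp
      · simp
      rcases eq_or_ne t q with rfl | hq
      · rw [Equiv.swap_apply_right, ← neg_sub, neg_dvd]
      · simp [Equiv.swap_apply_of_ne_of_ne hp hq]
    have hsplit : F * X t - rename (Equiv.swap p q) (F * X t) =
        (F - rename (Equiv.swap p q) F) * X t +
          rename (Equiv.swap p q) F * (X t - X (Equiv.swap p q t)) := by
      rw [map_mul, rename_X]
      ring
    rw [hsplit]
    exact dvd_add (hF.mul_right _) (hX.mul_left _)

lemma X_sub_X_mul_X_sub_X_dvd [IsDomain R] [DecidableEq σ] (htwo : IsUnit (2 : R)) {p q : σ}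
    (hpq : p ≠ q) {F : MvPolynomial σ R} (hsymm : rename (Equiv.swap p q) F = F)
    (hdvd : X p - X q ∣ F) : (X p - X q) * (X q - X p) ∣ F := by
  obtain ⟨G, rfl⟩ := hdvd
  have hanti : rename (Equiv.swap p q) G = -G := by
    simp only [map_mul, map_sub, rename_X, Equiv.swap_apply_left, Equiv.swap_apply_right] at hsymm
    exact mul_left_cancel₀ (irreducible_X_sub_X hpq).ne_zero (by linear_combination -hsymm)
  have hdvd_two : (X p - X q : MvPolynomial σ R) ∣ C 2 * G := by
    have := X_sub_X_dvd_sub_rename_swap p q G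
    rwa [hanti, sub_neg_eq_add, ← two_mul, ← map_ofNat (C : R →+* MvPolynomial σ R) 2] at this
  rw [(htwo.map C).dvd_mul_left] at hdvd_two
  rw [← neg_sub (X p) (X q), mul_neg, neg_dvd]
  exact mul_dvd_mul_left _ hdvd_two

lemma prod_X_sub_X_mul_X_sub_X_dvd [IsDomain R] [UniqueFactorizationMonoid R] [DecidableEq σ]
    (htwo : IsUnit (2 : R)) {ι : Type*} {s : Finset ι} {a b : ι → σ} (hne : ∀ k ∈ s, a k ≠ b k)
    (hinj : Set.InjOn (fun k => s(a k, b k)) s) {F : MvPolynomial σ R}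
    (hsymm : ∀ k ∈ s, rename (Equiv.swap (a k) (b k)) F = F)
    (hdvd : ∀ k ∈ s, X (a k) - X (b k) ∣ F) :
    ∏ k ∈ s, (X (a k) - X (b k)) * (X (b k) - X (a k)) ∣ F := by
  refine Finset.prod_dvd_of_isRelPrime (fun k hk l hl hkl => ?_) fun k hk =>
    X_sub_X_mul_X_sub_X_dvd htwo (hne k hk) (hsymm k hk) (hdvd k hk)
  have hprime : IsRelPrime (X (a k) - X (b k) : MvPolynomial σ R) (X (a l) - X (b l)) :=
    (irreducible_X_sub_X (hne k hk)).isRelPrime_iff_not_dvd.2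
      (not_X_sub_X_dvd_X_sub_X (hne l hl) fun h => hkl (hinj hl hk h).symm)
  simp only [Function.onFun]
  rw [← neg_sub (X (a k)) (X (b k)), ← neg_sub (X (a l)) (X (b l))]
  apply IsRelPrime.mul_left <;> apply IsRelPrime.mul_right <;>
    simpa only [IsRelPrime.neg_left_iff, IsRelPrime.neg_right_iff] using hprime

end DifferencesOfVariables

lemma prod_offDiag_eq_prod_filter_lt {ι M : Type*} [LinearOrder ι] [CommMonoid M] (s : Finset ι)
    (f : ι × ι → M) :
    ∏ x ∈ s.offDiag, f x = ∏ x ∈ s.offDiag with x.1 < x.2, f x * f x.swap := by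
  rw [← Finset.prod_filter_mul_prod_filter_not s.offDiag (fun x => x.1 < x.2),
    Finset.prod_mul_distrib]
  congr 1
  refine Finset.prod_nbij' Prod.swap Prod.swap ?_ ?_ ?_ ?_ ?_ <;>
    simp +contextual [Finset.mem_offDiag, eq_comm, lt_iff_le_and_ne]

/-- `∏_{(j, k) ∈ P} (ω_{v,j} − ω_{w,k})`, the shape of every factor of the localization formula. -/
noncomputable def diffProd (v w : Fin n) (P : Finset (ℕ × ℕ)) : PolyQ n :=
  ∏ x ∈ P, (X (v, x.1) - X (w, x.2))

/-- The discriminants at the vertices of `V`, each a product over ordered pairs, in the first `N v`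
variables. -/
noncomputable def vertexDisc (V : Finset (Fin n)) (N : Fin n → ℕ) : PolyQ n :=
  ∏ v ∈ V, diffProd v v (Finset.range (N v)).offDiag

lemma diffProd_self_ne_zero {v : Fin n} {P : Finset (ℕ × ℕ)} (hP : ∀ x ∈ P, x.1 ≠ x.2) :
    diffProd v v P ≠ 0 :=
  Finset.prod_ne_zero_iff.2 fun x hx =>
    (irreducible_X_sub_X fun h => hP x hx (congrArg Prod.snd h)).ne_zero

lemma vertexDisc_ne_zero (V : Finset (Fin n)) (N : Fin n → ℕ) : vertexDisc V N ≠ 0 :=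
  Finset.prod_ne_zero_iff.2 fun _ _ =>
    diffProd_self_ne_zero fun _ hx => (Finset.mem_offDiag.1 hx).2.2

lemma diffProd_isHomogeneous (v w : Fin n) (P : Finset (ℕ × ℕ)) :
    (diffProd v w P).IsHomogeneous P.card := by
  rw [Finset.card_eq_sum_ones]
  exact IsHomogeneous.prod P _ _ fun x _ =>
    (isHomogeneous_X ℚ (v, x.1)).sub (isHomogeneous_X ℚ (w, x.2))

lemma X_sub_X_dvd_diffProd {v : Fin n} {P : Finset (ℕ × ℕ)} {p q : ℕ}
    (h : (p, q) ∈ P ∨ (q, p) ∈ P) : (X (v, p) - X (v, q) : PolyQ n) ∣ diffProd v v P := by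
  have hmem : ∀ x ∈ P, (X (v, x.1) - X (v, x.2) : PolyQ n) ∣ diffProd v v P :=
    fun x hx => Finset.dvd_prod_of_mem _ hx
  rcases h with h | h
  · exact hmem (p, q) h
  · rw [← neg_sub, neg_dvd]
    exact hmem (q, p) h

lemma vertexDisc_dvd {V : Finset (Fin n)} {N : Fin n → ℕ} {F : PolyQ n}
    (hsymm : ∀ v ∈ V, ∀ p < N v, ∀ q < N v, rename (Equiv.swap (v, p) (v, q)) F = F)
    (hdvd : ∀ v ∈ V, ∀ p < N v, ∀ q < N v, p ≠ q → X (v, p) - X (v, q) ∣ F) :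
    vertexDisc V N ∣ F := by
  simp only [vertexDisc, diffProd, prod_offDiag_eq_prod_filter_lt, Prod.fst_swap, Prod.snd_swap]
  rw [Finset.prod_sigma']
  refine prod_X_sub_X_mul_X_sub_X_dvd (a := fun k : (_ : Fin n) × ℕ × ℕ => (k.1, k.2.1))
    (b := fun k => (k.1, k.2.2)) (isUnit_iff_ne_zero.2 two_ne_zero) ?_ ?_ ?_ ?_
  · rintro ⟨v, p, q⟩ hk
    simp_all
  · rintro ⟨v, p, q⟩ hk ⟨w, p', q'⟩ hl h
    simp only [Finset.coe_sigma, Set.mem_sigma_iff, Finset.mem_coe, Finset.mem_filter] at hk hl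
    have := hk.2.2
    have := hl.2.2
    simp only [Sym2.eq_iff, Prod.mk.injEq] at h
    obtain ⟨⟨rfl, rfl⟩, -, rfl⟩ | ⟨⟨rfl, rfl⟩, -, rfl⟩ := h
    · rfl
    · omega
  all_goals
    rintro ⟨v, p, q⟩ hk
    simp only [Finset.mem_sigma, Finset.mem_filter, Finset.mem_offDiag, Finset.mem_range] at hk
    obtain ⟨hv, ⟨hp, hq, hpq⟩, -⟩ := hk
  · exact hsymm v hv p hp q hq
  · exact hdvd v hv p hp q hq hpq

section Relabelling

/-- Renaming of the variables `ω_{v,j} ↦ ω_{v, e v j}` by a map of indices at each vertex. -/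
def relabel (e : Fin n → ℕ → ℕ) (p : Fin n × ℕ) : Fin n × ℕ := (p.1, e p.1 p.2)

/-- `τ` is an element of the product of symmetric groups `∏_v 𝔖_{N v}`. -/
def PermutesBelow (N : Fin n → ℕ) (τ : Fin n → Equiv.Perm ℕ) : Prop :=
  ∀ v j, τ v j ≠ j → j < N v

/-- The action of a family of permutations on families of index sets. -/
def permSubsets (τ : Fin n → Equiv.Perm ℕ) : (Fin n → Finset ℕ) ≃ (Fin n → Finset ℕ) :=
  Equiv.piCongrRight fun v => (τ v).finsetCongr

lemma permSubsets_apply (τ : Fin n → Equiv.Perm ℕ) (S : Fin n → Finset ℕ) (v : Fin n) :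
    permSubsets τ S v = (S v).map (τ v).toEmbedding := rfl

lemma vertexPerm_eq_relabel (v : Fin n) (σ : Equiv.Perm ℕ) :
    vertexPerm v σ = relabel fun w => (Pi.mulSingle v σ : Fin n → Equiv.Perm ℕ) w := by
  funext ⟨w, j⟩
  rcases eq_or_ne w v with rfl | h
  · simp [vertexPerm, relabel]
  · simp [vertexPerm, relabel, h]

lemma vertexPerm_swap (v : Fin n) (p q : ℕ) :
    vertexPerm v (Equiv.swap p q) = Equiv.swap (v, p) (v, q) := by
  funext ⟨w, j⟩
  simp only [vertexPerm, Equiv.swap_apply_def, Prod.mk.injEq]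
  split_ifs <;> simp_all

lemma permutesBelow_mulSingle {N : Fin n → ℕ} {v : Fin n} {σ : Equiv.Perm ℕ}
    (hσ : ∀ j, σ j ≠ j → j < N v) : PermutesBelow N (Pi.mulSingle v σ) := by
  intro w j hj
  rcases eq_or_ne w v with rfl | h
  · exact hσ j (by simpa using hj)
  · simp [h] at hj

lemma lt_of_swap_apply_ne {N p q : ℕ} (hp : p < N) (hq : q < N) {j : ℕ}
    (hj : Equiv.swap p q j ≠ j) : j < N := by
  rcases eq_or_ne j p with rfl | hjp
  · exact hp
  · rcases eq_or_ne j q with rfl | hjq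
    · exact hq
    · exact absurd (Equiv.swap_apply_of_ne_of_ne hjp hjq) hj

lemma PermutesBelow.map_range {N : Fin n → ℕ} {τ : Fin n → Equiv.Perm ℕ}
    (hτ : PermutesBelow N τ) (v : Fin n) :
    (Finset.range (N v)).map (τ v).toEmbedding = Finset.range (N v) :=
  Finset.map_perm fun j hj => Finset.mem_coe.2 (Finset.mem_range.2 (hτ v j hj))

lemma SymmIn.rename_relabel {N : Fin n → ℕ} {f : PolyQ n} (hf : SymmIn N f)
    {τ : Fin n → Equiv.Perm ℕ} (hτ : PermutesBelow N τ) :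
    rename (relabel fun v => τ v) f = f := by
  suffices ∀ V : Finset (Fin n), rename (relabel fun v => (V.piecewise τ 1) v) f = f by
    simpa using this Finset.univ
  intro V
  induction V using Finset.induction_on with
  | empty => exact rename_id_apply f
  | insert v V hv ih =>
    have hcomp : (relabel fun w => ((insert v V).piecewise τ 1) w) =
        vertexPerm v (τ v) ∘ relabel fun w => (V.piecewise τ 1) w := by
      funext ⟨w, j⟩
      rcases eq_or_ne w v with rfl | h
      · simp [relabel, vertexPerm, hv]
      · simp [relabel, vertexPerm, h]
    rw [hcomp, ← rename_rename, ih, hf v (τ v) (hτ v)]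

lemma rename_congr_of_vars {σ σ' R : Type*} [CommSemiring R] {f : MvPolynomial σ R}
    {e₁ e₂ : σ → σ'} (h : ∀ p ∈ f.vars, e₁ p = e₂ p) : rename e₁ f = rename e₂ f :=
  hom_congr_vars (f₁ := (rename e₁).toRingHom) (f₂ := (rename e₂).toRingHom)
    (by ext; simp) (fun p hp _ => by simp [h p hp]) rfl

lemma exists_perm_of_bijOn {N : ℕ} {e₁ e₂ : ℕ → ℕ} {I : Set ℕ} (h₁ : Set.BijOn e₁ (Set.Iio N) I)
    (h₂ : Set.BijOn e₂ (Set.Iio N) I) :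
    ∃ σ : Equiv.Perm ℕ, (∀ j, σ j ≠ j → j < N) ∧ ∀ j < N, e₂ (σ j) = e₁ j := by
  let s : Equiv.Perm (Set.Iio N) := (h₁.equiv e₁).trans (h₂.equiv e₂).symm
  refine ⟨Equiv.Perm.ofSubtype (p := (· ∈ Set.Iio N)) s, fun j hj => ?_, fun j hj => ?_⟩
  · by_contra h
    exact hj (Equiv.Perm.ofSubtype_apply_of_not_mem _ h)
  · rw [Equiv.Perm.ofSubtype_apply_of_mem (p := (· ∈ Set.Iio N)) s hj]
    have : h₂.equiv e₂ (s ⟨j, hj⟩) = h₁.equiv e₁ ⟨j, hj⟩ := by simp [s]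
    exact congrArg Subtype.val this

lemma rename_relabel_eq_of_bijOn {γ : Fin n → ℕ} {f : PolyQ n} (hf : f ∈ Hspace γ)
    {e₁ e₂ : Fin n → ℕ → ℕ} {I : Fin n → Set ℕ}
    (h₁ : ∀ v, Set.BijOn (e₁ v) (Set.Iio (γ v)) (I v))
    (h₂ : ∀ v, Set.BijOn (e₂ v) (Set.Iio (γ v)) (I v)) :
    rename (relabel e₁) f = rename (relabel e₂) f := by
  choose τ hτ hcomp using fun v => exists_perm_of_bijOn (h₁ v) (h₂ v)
  conv_rhs => rw [← hf.2.rename_relabel hτ, rename_rename]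
  exact rename_congr_of_vars fun p hp => by simp [relabel, hcomp _ _ (hf.1 p hp)]

/-- `enumerate S v` lists the elements of `S v` in increasing order; its value is `0` beyond the
last element. -/
def enumerate (S : Fin n → Finset ℕ) (v : Fin n) (j : ℕ) : ℕ := ((S v).sort (· ≤ ·)).getD j 0

lemma substAlong_eq_rename (S : Fin n → Finset ℕ) (f : PolyQ n) :
    substAlong S f = rename (relabel (enumerate S)) f := by
  rw [rename_eq_aeval]
  rfl

lemma enumerate_bijOn (S : Fin n → Finset ℕ) (v : Fin n) :
    Set.BijOn (enumerate S v) (Set.Iio (S v).card) (S v) := by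
  have hlen : ((S v).sort (· ≤ ·)).length = (S v).card := Finset.length_sort _
  have hget {j : ℕ} (hj : j < (S v).card) :
      enumerate S v j = ((S v).sort (· ≤ ·))[j]'(hlen ▸ hj) :=
    List.getD_eq_getElem _ _ _
  refine ⟨fun j hj => ?_, fun j hj k hk h => ?_, fun x hx => ?_⟩
  · rw [hget hj]
    exact (Finset.mem_sort _).1 (List.getElem_mem _)
  · rw [hget hj, hget hk] at h
    exact (Finset.sort_nodup _ _).getElem_inj_iff.1 h
  · obtain ⟨j, hj, rfl⟩ := List.getElem_of_mem ((Finset.mem_sort (· ≤ ·)).2 hx)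
    exact ⟨j, hlen ▸ hj, hget (hlen ▸ hj)⟩

lemma rename_substAlong {γ : Fin n → ℕ} {f : PolyQ n} (hf : f ∈ Hspace γ)
    {S : Fin n → Finset ℕ} (hS : ∀ v, (S v).card = γ v) (τ : Fin n → Equiv.Perm ℕ) :
    rename (relabel fun v => τ v) (substAlong S f) = substAlong (permSubsets τ S) f := by
  rw [substAlong_eq_rename, substAlong_eq_rename, rename_rename]
  refine rename_relabel_eq_of_bijOn (e₁ := fun v => τ v ∘ enumerate S v)
    (I := fun v => permSubsets τ S v) hf (fun v => ?_) fun v => ?_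
  · rw [← hS v, permSubsets_apply, Finset.coe_map]
    exact (τ v).injective.injOn.bijOn_image.comp (enumerate_bijOn S v)
  · rw [← hS v, ← (S v).card_map (τ v).toEmbedding]
    exact enumerate_bijOn _ v

lemma rename_relabel_diffProd (τ : Fin n → Equiv.Perm ℕ) (v w : Fin n) (P : Finset (ℕ × ℕ)) :
    rename (relabel fun v => τ v) (diffProd v w P) =
      diffProd v w (P.map ((τ v).toEmbedding.prodMap (τ w).toEmbedding)) := by
  simp [diffProd, relabel]

lemma offDiag_map {α β : Type*} (f : α ↪ β) (s : Finset α) :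
    s.offDiag.map (f.prodMap f) = (s.map f).offDiag := by
  ext ⟨a, b⟩
  simp only [Finset.mem_map, Finset.mem_offDiag, Function.Embedding.coe_prodMap, Prod.map,
    Prod.mk.injEq, Prod.exists]
  constructor
  · rintro ⟨x, y, ⟨hx, hy, hxy⟩, rfl, rfl⟩
    exact ⟨⟨x, hx, rfl⟩, ⟨y, hy, rfl⟩, f.injective.ne hxy⟩
  · rintro ⟨⟨x, hx, rfl⟩, ⟨y, hy, rfl⟩, hxy⟩
    exact ⟨x, y, ⟨hx, hy, fun h => hxy (congrArg f h)⟩, rfl, rfl⟩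

lemma PermutesBelow.rename_vertexDisc {N : Fin n → ℕ} {τ : Fin n → Equiv.Perm ℕ}
    (hτ : PermutesBelow N τ) (V : Finset (Fin n)) :
    rename (relabel fun v => τ v) (vertexDisc V N) = vertexDisc V N := by
  simp only [vertexDisc, map_prod, rename_relabel_diffProd, offDiag_map, hτ.map_range]

end Relabelling

section Localization

variable {γ₁ γ₂ : Fin n → ℕ} {S : Fin n → Finset ℕ} {τ : Fin n → Equiv.Perm ℕ}

/-- The pairs `S̄_v × S_w` indexing the factors that involve the vertices `v` and `w`. -/
def crossPairs (γ₁ γ₂ : Fin n → ℕ) (S : Fin n → Finset ℕ) (v w : Fin n) : Finset (ℕ × ℕ) :=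
  shuffleCompl γ₁ γ₂ S v ×ˢ S w

/-- The part of the denominator of the localization formula coming from the vertices of `V`. -/
noncomputable def partialDen (V : Finset (Fin n)) (γ₁ γ₂ : Fin n → ℕ) (S : Fin n → Finset ℕ) :
    PolyQ n :=
  ∏ v ∈ V, diffProd v v (crossPairs γ₁ γ₂ S v v)

/-- The complementary factor of `partialDen V γ₁ γ₂ S` in `vertexDisc V (γ₁ + γ₂)`. -/
noncomputable def cofactor (V : Finset (Fin n)) (γ₁ γ₂ : Fin n → ℕ) (S : Fin n → Finset ℕ) :
    PolyQ n :=
  ∏ v ∈ V, diffProd v v ((Finset.range (γ₁ v + γ₂ v)).offDiag \ crossPairs γ₁ γ₂ S v v)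

/-- The numerator of `∑_{S ∈ A} F S / partialDen V γ₁ γ₂ S` over the common denominator
`vertexDisc V (γ₁ + γ₂)`. -/
noncomputable def clearedSum (V : Finset (Fin n)) (γ₁ γ₂ : Fin n → ℕ)
    (A : Finset (Fin n → Finset ℕ)) (F : (Fin n → Finset ℕ) → PolyQ n) : PolyQ n :=
  ∑ S ∈ A, F S * cofactor V γ₁ γ₂ S

lemma mem_shuffles :
    S ∈ shuffles γ₁ γ₂ ↔ ∀ v, S v ⊆ Finset.range (γ₁ v + γ₂ v) ∧ (S v).card = γ₁ v := by
  simp [shuffles, Fintype.mem_piFinset]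

lemma card_shuffleCompl (hS : S ∈ shuffles γ₁ γ₂) (v : Fin n) :
    (shuffleCompl γ₁ γ₂ S v).card = γ₂ v := by
  obtain ⟨hsub, hcard⟩ := mem_shuffles.1 hS v
  rw [shuffleCompl, Finset.card_sdiff_of_subset hsub, hcard, Finset.card_range,
    Nat.add_sub_cancel_left]

lemma crossPairs_subset_offDiag (hS : S ∈ shuffles γ₁ γ₂) (v : Fin n) :
    crossPairs γ₁ γ₂ S v v ⊆ (Finset.range (γ₁ v + γ₂ v)).offDiag := by
  intro x hx
  obtain ⟨hx₁, hx₂⟩ := Finset.mem_product.1 hx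
  obtain ⟨hlt, hnot⟩ := Finset.mem_sdiff.1 hx₁
  exact Finset.mem_offDiag.2
    ⟨hlt, (mem_shuffles.1 hS v).1 hx₂, fun h => hnot (h ▸ hx₂)⟩

lemma interactionNum_eq_prod_diffProd (Q : FinQuiver n) (γ₁ γ₂ : Fin n → ℕ)
    (S : Fin n → Finset ℕ) : interactionNum Q γ₁ γ₂ S =
      ∏ a, diffProd (Q.hd a) (Q.tl a) (crossPairs γ₁ γ₂ S (Q.hd a) (Q.tl a)) := by
  simp only [interactionNum, arrowFactor, diffProd, crossPairs, Finset.prod_product]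

lemma interactionDen_eq_partialDen (γ₁ γ₂ : Fin n → ℕ) (S : Fin n → Finset ℕ) :
    interactionDen γ₁ γ₂ S = partialDen Finset.univ γ₁ γ₂ S := by
  simp only [interactionDen, partialDen, diffProd, crossPairs, Finset.prod_product]

lemma partialDen_ne_zero (V : Finset (Fin n)) (hS : S ∈ shuffles γ₁ γ₂) :
    partialDen V γ₁ γ₂ S ≠ 0 :=
  Finset.prod_ne_zero_iff.2 fun v _ => diffProd_self_ne_zero fun _ hx =>
    (Finset.mem_offDiag.1 (crossPairs_subset_offDiag hS v hx)).2.2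

lemma partialDen_mul_cofactor (V : Finset (Fin n)) (hS : S ∈ shuffles γ₁ γ₂) :
    partialDen V γ₁ γ₂ S * cofactor V γ₁ γ₂ S = vertexDisc V (γ₁ + γ₂) := by
  rw [partialDen, cofactor, vertexDisc, ← Finset.prod_mul_distrib]
  refine Finset.prod_congr rfl fun v _ => ?_
  rw [mul_comm]
  exact Finset.prod_sdiff (crossPairs_subset_offDiag hS v)

lemma sum_div_partialDen (V : Finset (Fin n)) {A : Finset (Fin n → Finset ℕ)}
    (hA : A ⊆ shuffles γ₁ γ₂) (F : (Fin n → Finset ℕ) → PolyQ n) :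
    ∑ S ∈ A, algebraMap (PolyQ n) (FractionRing (PolyQ n)) (F S) /
        algebraMap (PolyQ n) (FractionRing (PolyQ n)) (partialDen V γ₁ γ₂ S) =
      algebraMap (PolyQ n) (FractionRing (PolyQ n)) (clearedSum V γ₁ γ₂ A F) /
        algebraMap (PolyQ n) (FractionRing (PolyQ n)) (vertexDisc V (γ₁ + γ₂)) := by
  rw [clearedSum, map_sum, Finset.sum_div]
  refine Finset.sum_congr rfl fun S hS => ?_
  rw [div_eq_div_iff (by simpa using partialDen_ne_zero V (hA hS))
    (by simpa using vertexDisc_ne_zero V _), ← partialDen_mul_cofactor V (hA hS), ← map_mul,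
    ← map_mul]
  ring_nf

lemma X_sub_X_dvd_cofactor {V : Finset (Fin n)} {v : Fin n} (hv : v ∈ V) {p q : ℕ}
    (hp : p < γ₁ v + γ₂ v) (hq : q < γ₁ v + γ₂ v) (hpq : p ≠ q) (S : Fin n → Finset ℕ) :
    X (v, p) - X (v, q) ∣ cofactor V γ₁ γ₂ S := by
  refine (X_sub_X_dvd_diffProd ?_).trans (Finset.dvd_prod_of_mem _ hv)
  -- `(p, q)` and `(q, p)` cannot both lie in `S̄_v × S_v`
  simp only [crossPairs, shuffleCompl, Finset.mem_product, Finset.mem_sdiff, Finset.mem_offDiag,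
    Finset.mem_range]
  tauto

lemma permSubsets_mem_shuffles (hτ : PermutesBelow (γ₁ + γ₂) τ) :
    permSubsets τ S ∈ shuffles γ₁ γ₂ ↔ S ∈ shuffles γ₁ γ₂ := by
  simp only [mem_shuffles]
  refine forall_congr' fun v => ?_
  rw [permSubsets_apply, Finset.card_map]
  nth_rw 1 [← Pi.add_apply, ← hτ.map_range v, Finset.map_subset_map]
  rfl

lemma shuffleCompl_permSubsets (hτ : PermutesBelow (γ₁ + γ₂) τ) (S : Fin n → Finset ℕ) :
    shuffleCompl γ₁ γ₂ (permSubsets τ S) = permSubsets τ (shuffleCompl γ₁ γ₂ S) := by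
  funext v
  rw [permSubsets_apply, shuffleCompl, shuffleCompl, permSubsets_apply, Finset.map_sdiff]
  congr 1
  exact (hτ.map_range v).symm

lemma crossPairs_permSubsets (hτ : PermutesBelow (γ₁ + γ₂) τ) (S : Fin n → Finset ℕ)
    (v w : Fin n) : crossPairs γ₁ γ₂ (permSubsets τ S) v w =
      (crossPairs γ₁ γ₂ S v w).map ((τ v).toEmbedding.prodMap (τ w).toEmbedding) := by
  rw [crossPairs, crossPairs, shuffleCompl_permSubsets hτ, Finset.prodMap_map_product]
  rfl

lemma rename_interactionNum (Q : FinQuiver n) (hτ : PermutesBelow (γ₁ + γ₂) τ)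
    (S : Fin n → Finset ℕ) : rename (relabel fun v => τ v) (interactionNum Q γ₁ γ₂ S) =
      interactionNum Q γ₁ γ₂ (permSubsets τ S) := by
  simp only [interactionNum_eq_prod_diffProd, map_prod, rename_relabel_diffProd,
    crossPairs_permSubsets hτ]

lemma rename_cofactor (hτ : PermutesBelow (γ₁ + γ₂) τ) (V : Finset (Fin n))
    (S : Fin n → Finset ℕ) : rename (relabel fun v => τ v) (cofactor V γ₁ γ₂ S) =
      cofactor V γ₁ γ₂ (permSubsets τ S) := by
  have hrange (v : Fin n) : (Finset.range (γ₁ v + γ₂ v)).map (τ v).toEmbedding =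
      Finset.range (γ₁ v + γ₂ v) := hτ.map_range v
  simp only [cofactor, map_prod, rename_relabel_diffProd, crossPairs_permSubsets hτ,
    Finset.map_sdiff, offDiag_map, hrange]

lemma rename_clearedSum (hτ : PermutesBelow (γ₁ + γ₂) τ) (V : Finset (Fin n))
    {A : Finset (Fin n → Finset ℕ)} (hA : ∀ S, permSubsets τ S ∈ A ↔ S ∈ A)
    {F : (Fin n → Finset ℕ) → PolyQ n}
    (hF : ∀ S ∈ A, rename (relabel fun v => τ v) (F S) = F (permSubsets τ S)) :
    rename (relabel fun v => τ v) (clearedSum V γ₁ γ₂ A F) = clearedSum V γ₁ γ₂ A F := by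
  rw [clearedSum, map_sum]
  refine Finset.sum_equiv (permSubsets τ) (fun S => (hA S).symm) fun S hS => ?_
  rw [map_mul, hF S hS, rename_cofactor hτ]

-- Each cofactor contains every `ω_{v,p} − ω_{v,q}` up to sign, and symmetry makes it occur twice.
lemma vertexDisc_dvd_clearedSum {V : Finset (Fin n)} {A : Finset (Fin n → Finset ℕ)}
    {F : (Fin n → Finset ℕ) → PolyQ n}
    (hsymm : ∀ τ, PermutesBelow (γ₁ + γ₂) τ → (∀ v ∉ V, τ v = 1) →
      rename (relabel fun v => τ v) (clearedSum V γ₁ γ₂ A F) = clearedSum V γ₁ γ₂ A F) :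
    vertexDisc V (γ₁ + γ₂) ∣ clearedSum V γ₁ γ₂ A F := by
  refine vertexDisc_dvd (fun v hv p hp q hq => ?_) fun v hv p hp q hq hpq =>
    Finset.dvd_sum fun S _ => (X_sub_X_dvd_cofactor hv hp hq hpq S).mul_left _
  rw [← vertexPerm_swap, vertexPerm_eq_relabel]
  exact hsymm _ (permutesBelow_mulSingle fun j hj => lt_of_swap_apply_ne hp hq hj)
    fun w hw => Pi.mulSingle_eq_of_ne (ne_of_mem_of_not_mem hv hw).symm _

end Localization

section CohaProduct

variable {Q : FinQuiver n} {γ₁ γ₂ : Fin n → ℕ} {S : Fin n → Finset ℕ} {f₁ f₂ : PolyQ n}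

/-- The numerator of the summand of `cohaMulRat` indexed by `S`. -/
noncomputable def cohaSummand (Q : FinQuiver n) (γ₁ γ₂ : Fin n → ℕ) (f₁ f₂ : PolyQ n)
    (S : Fin n → Finset ℕ) : PolyQ n :=
  substAlong S f₁ * substAlong (shuffleCompl γ₁ γ₂ S) f₂ * interactionNum Q γ₁ γ₂ S

lemma rename_cohaSummand (hf₁ : f₁ ∈ Hspace γ₁) (hf₂ : f₂ ∈ Hspace γ₂)
    {τ : Fin n → Equiv.Perm ℕ} (hτ : PermutesBelow (γ₁ + γ₂) τ) (hS : S ∈ shuffles γ₁ γ₂) :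
    rename (relabel fun v => τ v) (cohaSummand Q γ₁ γ₂ f₁ f₂ S) =
      cohaSummand Q γ₁ γ₂ f₁ f₂ (permSubsets τ S) := by
  rw [cohaSummand, map_mul, map_mul, rename_interactionNum Q hτ,
    rename_substAlong hf₁ fun v => (mem_shuffles.1 hS v).2,
    rename_substAlong hf₂ (card_shuffleCompl hS), cohaSummand, shuffleCompl_permSubsets hτ]

lemma rename_clearedSum_cohaSummand (Q : FinQuiver n) (hf₁ : f₁ ∈ Hspace γ₁)
    (hf₂ : f₂ ∈ Hspace γ₂) {τ : Fin n → Equiv.Perm ℕ} (hτ : PermutesBelow (γ₁ + γ₂) τ)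
    (V : Finset (Fin n)) :
    rename (relabel fun v => τ v)
        (clearedSum V γ₁ γ₂ (shuffles γ₁ γ₂) (cohaSummand Q γ₁ γ₂ f₁ f₂)) =
      clearedSum V γ₁ γ₂ (shuffles γ₁ γ₂) (cohaSummand Q γ₁ γ₂ f₁ f₂) :=
  rename_clearedSum hτ V (fun _ => permSubsets_mem_shuffles hτ) fun _ hS =>
    rename_cohaSummand hf₁ hf₂ hτ hS

lemma vars_subset_of_dvd {σ R : Type*} [CommRing R] [IsDomain R] {F G : MvPolynomial σ R}
    (hG : G ≠ 0) (h : F ∣ G) : F.vars ⊆ G.vars := by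
  obtain ⟨H, rfl⟩ := h
  intro p hp
  rw [mem_vars_iff_degreeOf_ne_zero] at hp ⊢
  rw [degreeOf_mul_eq (left_ne_zero_of_mul hG) (right_ne_zero_of_mul hG)]
  omega

/-- Polynomials in the variables `ω_{v,j}` with `j < N v`. -/
noncomputable abbrev supportedBelow (N : Fin n → ℕ) : Subalgebra ℚ (PolyQ n) :=
  supported ℚ {p | p.2 < N p.1}

lemma diffProd_mem_supportedBelow {N : Fin n → ℕ} {v w : Fin n} {P : Finset (ℕ × ℕ)}
    (hP : P ⊆ Finset.range (N v) ×ˢ Finset.range (N w)) : diffProd v w P ∈ supportedBelow N := by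
  refine prod_mem fun x hx => ?_
  obtain ⟨hx₁, hx₂⟩ := Finset.mem_product.1 (hP hx)
  exact sub_mem (X_mem_supported.2 (Finset.mem_range.1 hx₁))
    (X_mem_supported.2 (Finset.mem_range.1 hx₂))

lemma substAlong_mem_supportedBelow {N γ : Fin n → ℕ} {f : PolyQ n} (hf : f ∈ Hspace γ)
    (hcard : ∀ v, (S v).card = γ v) (hsub : ∀ v, S v ⊆ Finset.range (N v)) :
    substAlong S f ∈ supportedBelow N := by
  rw [substAlong_eq_rename, mem_supported]
  intro p hp
  obtain ⟨q, hq, rfl⟩ := mem_vars_rename _ _ hp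
  have hmem : enumerate S q.1 q.2 ∈ (S q.1 : Set ℕ) :=
    (enumerate_bijOn S q.1).mapsTo ((hf.1 q hq).trans_eq (hcard q.1).symm)
  exact Finset.mem_range.1 (hsub q.1 hmem)

lemma cohaSummand_mem_supportedBelow (hf₁ : f₁ ∈ Hspace γ₁) (hf₂ : f₂ ∈ Hspace γ₂)
    (hS : S ∈ shuffles γ₁ γ₂) :
    cohaSummand Q γ₁ γ₂ f₁ f₂ S ∈ supportedBelow (γ₁ + γ₂) := by
  have hsub := fun v => (mem_shuffles.1 hS v).1
  rw [cohaSummand, interactionNum_eq_prod_diffProd]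
  refine mul_mem (mul_mem ?_ ?_) (prod_mem fun a _ => diffProd_mem_supportedBelow
    (Finset.product_subset_product Finset.sdiff_subset (hsub _)))
  · exact substAlong_mem_supportedBelow hf₁ (fun v => (mem_shuffles.1 hS v).2) hsub
  · exact substAlong_mem_supportedBelow hf₂ (card_shuffleCompl hS) fun _ => Finset.sdiff_subset

lemma cofactor_mem_supportedBelow (V : Finset (Fin n)) (γ₁ γ₂ : Fin n → ℕ)
    (S : Fin n → Finset ℕ) : cofactor V γ₁ γ₂ S ∈ supportedBelow (γ₁ + γ₂) :=
  prod_mem fun _ _ => diffProd_mem_supportedBelow <| Finset.sdiff_subset.trans fun _ hx =>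
    Finset.mem_product.2 ⟨(Finset.mem_offDiag.1 hx).1, (Finset.mem_offDiag.1 hx).2.1⟩

lemma exists_algebraMap_eq_cohaMulRat (Q : FinQuiver n) (hf₁ : f₁ ∈ Hspace γ₁)
    (hf₂ : f₂ ∈ Hspace γ₂) : ∃ P ∈ Hspace (γ₁ + γ₂),
      algebraMap (PolyQ n) (FractionRing (PolyQ n)) P = cohaMulRat Q γ₁ γ₂ f₁ f₂ := by
  set D : PolyQ n := vertexDisc Finset.univ (γ₁ + γ₂)
  have hD₀ : D ≠ 0 := vertexDisc_ne_zero _ _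
  have hsymm := fun τ hτ =>
    rename_clearedSum_cohaSummand Q hf₁ hf₂ (τ := τ) hτ Finset.univ
  obtain ⟨P, hP⟩ := vertexDisc_dvd_clearedSum fun τ hτ _ => hsymm τ hτ
  refine ⟨P, ⟨?_, fun v σ hσ => ?_⟩, ?_⟩
  · rcases eq_or_ne P 0 with rfl | hP₀
    · simp
    have hsupp : D * P ∈ supportedBelow (γ₁ + γ₂) := hP ▸ sum_mem fun S hS =>
      mul_mem (cohaSummand_mem_supportedBelow hf₁ hf₂ hS) (cofactor_mem_supportedBelow _ _ _ S)
    exact fun p hp => mem_supported.1 hsupp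
      (vars_subset_of_dvd (mul_ne_zero hD₀ hP₀) (dvd_mul_left P D) hp)
  · have hτ := permutesBelow_mulSingle hσ
    have h := hsymm _ hτ
    rw [hP, map_mul, hτ.rename_vertexDisc, ← vertexPerm_eq_relabel] at h
    exact mul_left_cancel₀ hD₀ h
  · have hsum := sum_div_partialDen Finset.univ (Finset.Subset.refl (shuffles γ₁ γ₂))
      (cohaSummand Q γ₁ γ₂ f₁ f₂)
    rw [hP, map_mul, mul_div_cancel_left₀ _ (by simpa using hD₀)] at hsum
    simp only [← hsum, cohaMulRat, cohaSummand, interactionDen_eq_partialDen]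

lemma cohaMul_eq_of_algebraMap_eq {P : PolyQ n}
    (h : algebraMap (PolyQ n) (FractionRing (PolyQ n)) P = cohaMulRat Q γ₁ γ₂ f₁ f₂) :
    cohaMul Q γ₁ γ₂ f₁ f₂ = P := by
  have hex : ∃ P : PolyQ n,
      algebraMap (PolyQ n) (FractionRing (PolyQ n)) P = cohaMulRat Q γ₁ γ₂ f₁ f₂ := ⟨P, h⟩
  rw [cohaMul, dif_pos hex]
  exact IsFractionRing.injective (PolyQ n) (FractionRing (PolyQ n)) (hex.choose_spec.trans h.symm)

lemma algebraMap_cohaMul (Q : FinQuiver n) (hf₁ : f₁ ∈ Hspace γ₁) (hf₂ : f₂ ∈ Hspace γ₂) :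
    algebraMap (PolyQ n) (FractionRing (PolyQ n)) (cohaMul Q γ₁ γ₂ f₁ f₂) =
      cohaMulRat Q γ₁ γ₂ f₁ f₂ := by
  obtain ⟨P, -, h⟩ := exists_algebraMap_eq_cohaMulRat Q hf₁ hf₂
  rw [cohaMul_eq_of_algebraMap_eq h, h]

lemma cohaMul_mem_Hspace (Q : FinQuiver n) (hf₁ : f₁ ∈ Hspace γ₁) (hf₂ : f₂ ∈ Hspace γ₂) :
    cohaMul Q γ₁ γ₂ f₁ f₂ ∈ Hspace (γ₁ + γ₂) := by
  obtain ⟨P, hP, h⟩ := exists_algebraMap_eq_cohaMulRat Q hf₁ hf₂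
  rwa [cohaMul_eq_of_algebraMap_eq h]

lemma one_mem_Hspace (γ : Fin n → ℕ) : 1 ∈ Hspace γ :=
  ⟨by simp, fun _ _ _ => map_one _⟩

lemma shuffles_zero_left (γ : Fin n → ℕ) : shuffles 0 γ = {fun _ => ∅} := by
  ext S
  simp only [mem_shuffles, Pi.zero_apply, Finset.card_eq_zero, Finset.mem_singleton, funext_iff]
  exact forall_congr' fun v => and_iff_right_of_imp fun h => by simp [h]

lemma substAlong_range {γ : Fin n → ℕ} {f : PolyQ n} (hf : f ∈ Hspace γ) :
    substAlong (fun v => Finset.range (γ v)) f = f := by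
  have hid : rename (relabel fun _ => id) f = f := rename_id_apply f
  conv_rhs => rw [← hid]
  rw [substAlong_eq_rename]
  refine rename_relabel_eq_of_bijOn (I := fun v => Set.Iio (γ v)) hf (fun v => ?_) fun v =>
    Set.bijOn_id _
  simpa using enumerate_bijOn (fun v => Finset.range (γ v)) v

lemma cohaMul_zero_one (Q : FinQuiver n) {γ : Fin n → ℕ} {f : PolyQ n} (hf : f ∈ Hspace γ) :
    cohaMul Q 0 γ 1 f = f := by
  refine cohaMul_eq_of_algebraMap_eq ?_
  have hcompl : shuffleCompl 0 γ (fun _ => ∅) = fun v => Finset.range (γ v) := by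
    funext v
    simp [shuffleCompl]
  simp [cohaMulRat, shuffles_zero_left, hcompl, substAlong_range hf, interactionNum, arrowFactor,
    interactionDen]

lemma cohaMul_add_left (Q : FinQuiver n) {f f' g : PolyQ n} (hf : f ∈ Hspace γ₁)
    (hf' : f' ∈ Hspace γ₁) (hg : g ∈ Hspace γ₂) :
    cohaMul Q γ₁ γ₂ (f + f') g = cohaMul Q γ₁ γ₂ f g + cohaMul Q γ₁ γ₂ f' g := by
  refine cohaMul_eq_of_algebraMap_eq ?_
  rw [map_add, algebraMap_cohaMul Q hf hg, algebraMap_cohaMul Q hf' hg]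
  simp only [cohaMulRat, map_add, add_mul, add_div, Finset.sum_add_distrib]

lemma cohaMul_smul_left (Q : FinQuiver n) (c : ℚ) {f g : PolyQ n} (hf : f ∈ Hspace γ₁)
    (hg : g ∈ Hspace γ₂) : cohaMul Q γ₁ γ₂ (c • f) g = c • cohaMul Q γ₁ γ₂ f g := by
  refine cohaMul_eq_of_algebraMap_eq ?_
  rw [smul_eq_C_mul, map_mul, algebraMap_cohaMul Q hf hg, cohaMulRat, Finset.mul_sum]
  simp only [cohaMulRat, smul_eq_C_mul, map_mul, algHom_C, mul_assoc, mul_div_assoc]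
  rfl

end CohaProduct

section PartialSum

variable {Q : FinQuiver n} {γ₁ γ₂ : Fin n → ℕ} {S : Fin n → Finset ℕ}

/-- The numerator, over the common denominator `vertexDisc (univ.erase i) (γ₁ + γ₂)`, of the sum of
`interactionNum / partialDen (univ.erase i)` over all shuffles `S` with `S i = T`. -/
noncomputable def partialNum (Q : FinQuiver n) (γ₁ γ₂ : Fin n → ℕ) (i : Fin n) (T : Finset ℕ) :
    PolyQ n :=
  clearedSum (Finset.univ.erase i) γ₁ γ₂ {S ∈ shuffles γ₁ γ₂ | S i = T} (interactionNum Q γ₁ γ₂)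

lemma vertexDisc_dvd_partialNum (Q : FinQuiver n) (γ₁ γ₂ : Fin n → ℕ) (i : Fin n)
    (T : Finset ℕ) :
    vertexDisc (Finset.univ.erase i) (γ₁ + γ₂) ∣ partialNum Q γ₁ γ₂ i T := by
  refine vertexDisc_dvd_clearedSum fun τ hτ hτV => rename_clearedSum hτ _ (fun S => ?_)
    fun S _ => rename_interactionNum Q hτ S
  have hτi : τ i = 1 := hτV i (Finset.notMem_erase i _)
  have hSi : permSubsets τ S i = S i := by
    rw [permSubsets_apply, hτi]
    exact Finset.map_refl
  rw [Finset.mem_filter, Finset.mem_filter, permSubsets_mem_shuffles hτ, hSi]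

lemma exists_eq_mul_C_of_dvd {σ R : Type*} [CommRing R] [IsDomain R] {F G : MvPolynomial σ R}
    (hG : G ≠ 0) (hdvd : G ∣ F) (hdeg : F.totalDegree ≤ G.totalDegree) : ∃ c, F = G * C c := by
  obtain ⟨H, rfl⟩ := hdvd
  rcases eq_or_ne H 0 with rfl | hH
  · exact ⟨0, by simp⟩
  rw [totalDegree_mul_of_isDomain hG hH] at hdeg
  exact ⟨_, congrArg (G * ·) (totalDegree_eq_zero_iff_eq_C.1 (by omega))⟩

lemma card_crossPairs (hS : S ∈ shuffles γ₁ γ₂) (v w : Fin n) :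
    (crossPairs γ₁ γ₂ S v w).card = γ₂ v * γ₁ w := by
  rw [crossPairs, Finset.card_product, card_shuffleCompl hS, (mem_shuffles.1 hS w).2]

lemma interactionNum_isHomogeneous (Q : FinQuiver n) (hS : S ∈ shuffles γ₁ γ₂) :
    (interactionNum Q γ₁ γ₂ S).IsHomogeneous (∑ a, γ₂ (Q.hd a) * γ₁ (Q.tl a)) := by
  rw [interactionNum_eq_prod_diffProd]
  exact IsHomogeneous.prod _ _ _ fun a _ => card_crossPairs hS _ _ ▸ diffProd_isHomogeneous _ _ _

lemma partialDen_isHomogeneous (V : Finset (Fin n)) (hS : S ∈ shuffles γ₁ γ₂) :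
    (partialDen V γ₁ γ₂ S).IsHomogeneous (∑ v ∈ V, γ₂ v * γ₁ v) :=
  IsHomogeneous.prod _ _ _ fun v _ => card_crossPairs hS v v ▸ diffProd_isHomogeneous _ _ _

lemma exists_partialNum_eq_mul_C (i : Fin n) (T : Finset ℕ)
    (hdeg : ∑ a, γ₂ (Q.hd a) * γ₁ (Q.tl a) ≤ ∑ v ∈ Finset.univ.erase i, γ₂ v * γ₁ v) :
    ∃ c, partialNum Q γ₁ γ₂ i T = vertexDisc (Finset.univ.erase i) (γ₁ + γ₂) * C c := by
  refine exists_eq_mul_C_of_dvd (vertexDisc_ne_zero _ _) (vertexDisc_dvd_partialNum _ _ _ _ _)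
    (totalDegree_finsetSum_le fun S hS => ?_)
  replace hS := (Finset.mem_filter.1 hS).1
  have hprod := partialDen_mul_cofactor (Finset.univ.erase i) hS
  have hcof := right_ne_zero_of_mul (hprod.trans_ne (vertexDisc_ne_zero _ _))
  have hden := partialDen_ne_zero (Finset.univ.erase i) hS
  rw [← hprod, totalDegree_mul_of_isDomain hden hcof,
    (partialDen_isHomogeneous _ hS).totalDegree hden]
  exact (totalDegree_mul _ _).trans (Nat.add_le_add_right
    ((interactionNum_isHomogeneous Q hS).totalDegree_le.trans hdeg) _)

end PartialSum

section BlockSpecialization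

open PowerSeries (constantCoeff)

variable {β : Fin n → ℕ} {v w : Fin n} {P : Finset (ℕ × ℕ)}

/-- The specialization `ω_{v,j} ↦ ⌊j / β v⌋ + (j mod β v) t`: the `(r + s) β v` variables at `v`
fall into `r + s` consecutive blocks of length `β v`, those of block `b` meeting in `b` at `t = 0`.
-/
noncomputable def blockSpec (β : Fin n → ℕ) : PolyQ n →ₐ[ℚ] PowerSeries ℚ :=
  aeval fun p => PowerSeries.C ((p.2 / β p.1 : ℕ) : ℚ) +
    PowerSeries.C ((p.2 % β p.1 : ℕ) : ℚ) * PowerSeries.X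

/-- The pairs of `P` lying in equal blocks at `v` and `w`. -/
def blockPairs (β : Fin n → ℕ) (v w : Fin n) (P : Finset (ℕ × ℕ)) : Finset (ℕ × ℕ) :=
  {x ∈ P | x.1 / β v = x.2 / β w}

lemma blockSpec_X_sub_X (β : Fin n → ℕ) (p q : Fin n × ℕ) :
    blockSpec β (X p - X q) =
      PowerSeries.C (((p.2 / β p.1 : ℕ) : ℚ) - (q.2 / β q.1 : ℕ)) +
        PowerSeries.C (((p.2 % β p.1 : ℕ) : ℚ) - (q.2 % β q.1 : ℕ)) * PowerSeries.X := by
  simp only [blockSpec, map_sub, aeval_X]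
  ring

lemma constantCoeff_blockSpec_diffProd (β : Fin n → ℕ) (v w : Fin n) (P : Finset (ℕ × ℕ)) :
    constantCoeff (blockSpec β (diffProd v w P)) =
      ∏ x ∈ P, (((x.1 / β v : ℕ) : ℚ) - (x.2 / β w : ℕ)) := by
  simp [diffProd, map_prod, blockSpec_X_sub_X]

lemma X_pow_card_blockPairs_dvd (β : Fin n → ℕ) (v w : Fin n) (P : Finset (ℕ × ℕ)) :
    PowerSeries.X ^ (blockPairs β v w P).card ∣ blockSpec β (diffProd v w P) := by
  rw [diffProd, map_prod, ← Finset.prod_const, blockPairs, Finset.prod_filter]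
  refine Finset.prod_dvd_prod_of_dvd _ _ fun x _ => ?_
  split_ifs with h
  · rw [blockSpec_X_sub_X, h]
    simp
  · exact one_dvd _

lemma isUnit_C_add_mul_X {K : Type*} [Field K] {a : K} (ha : a ≠ 0) (F : PowerSeries K) :
    IsUnit (PowerSeries.C a + F * PowerSeries.X) := by
  simpa [PowerSeries.isUnit_iff_constantCoeff] using ha

lemma associated_blockSpec_diffProd_self (β : Fin n → ℕ) (v : Fin n)
    (hP : ∀ x ∈ P, x.1 ≠ x.2) :
    Associated (blockSpec β (diffProd v v P)) (PowerSeries.X ^ (blockPairs β v v P).card) := by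
  rw [diffProd, map_prod, ← Finset.prod_const, blockPairs, Finset.prod_filter]
  refine Associated.prod _ _ _ fun x hx => ?_
  rw [blockSpec_X_sub_X]
  split_ifs with h
  · have hmod : x.1 % β v ≠ x.2 % β v := fun hmod => hP x hx <| by
      rw [← Nat.div_add_mod x.1 (β v), ← Nat.div_add_mod x.2 (β v), h, hmod]
    have hunit : IsUnit (PowerSeries.C (((x.1 % β v : ℕ) : ℚ) - (x.2 % β v : ℕ))) :=
      (IsUnit.mk0 _ (sub_ne_zero.2 (Nat.cast_injective.ne hmod))).map _
    simpa [h] using associated_unit_mul_left _ _ hunit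
  · exact associated_one_iff_isUnit.2
      (isUnit_C_add_mul_X (sub_ne_zero.2 (Nat.cast_injective.ne h)) _)

end BlockSpecialization

section EulerForm

lemma FinQuiver.euler_add_right (Q : FinQuiver n) (α β β' : Fin n → ℕ) :
    Q.euler α (β + β') = Q.euler α β + Q.euler α β' := by
  simp only [FinQuiver.euler, Pi.add_apply, Nat.cast_add, mul_add, Finset.sum_add_distrib]
  ring

lemma FinQuiver.euler_sum_left (Q : FinQuiver n) {ι : Type*} (s : Finset ι)
    (α : ι → Fin n → ℕ) (β : Fin n → ℕ) :
    Q.euler (∑ b ∈ s, α b) β = ∑ b ∈ s, Q.euler (α b) β := by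
  simp only [FinQuiver.euler, Finset.sum_apply, Nat.cast_sum, Finset.sum_mul,
    Finset.sum_sub_distrib]
  rw [Finset.sum_comm, Finset.sum_comm (s := Finset.univ (α := Q.Arr))]

lemma FinQuiver.euler_smul_left (Q : FinQuiver n) (r : ℕ) (α β : Fin n → ℕ) :
    Q.euler (r • α) β = r * Q.euler α β := by
  simpa using Q.euler_sum_left (Finset.range r) (fun _ => α) β

/-- `β` is a root of `Q` below which the Tits form is positive. A positive root of a full Dynkin
subquiver has this property, which no longer mentions the subquiver. -/
structure FinQuiver.IsDynkinRoot (Q : FinQuiver n) (β : Fin n → ℕ) : Prop where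
  euler_self : Q.euler β β = 1
  euler_pos : ∀ α ≤ β, α ≠ 0 → 0 < Q.euler α α

lemma Subquiver.Full.eulerZ_eq_euler {Q : FinQuiver n} {Q' : Subquiver Q} (hfull : Q'.Full)
    {α : Fin n → ℕ} (hα : ∀ v, v ∉ Q'.verts → α v = 0) :
    Q'.eulerZ (fun v => α v) (fun v => α v) = Q.euler α α := by
  refine congrArg₂ (· - ·) ?_ ?_
  · refine Finset.sum_subset (Finset.subset_univ _) fun v _ hv => ?_
    simp [hα v hv]
  · refine Finset.sum_subset (Finset.subset_univ _) fun a _ ha => ?_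
    by_cases hhd : Q.hd a ∈ Q'.verts
    · simp [hα _ fun htl => ha (hfull a hhd htl)]
    · simp [hα _ hhd]

lemma Subquiver.IsPosRoot.isDynkinRoot {Q : FinQuiver n} {Q' : Subquiver Q} {β : Fin n → ℕ}
    (hβ : Q'.IsPosRoot β) (hfull : Q'.Full) (hpos : Q'.PosDefTits) : Q.IsDynkinRoot β where
  euler_self := by rw [← hfull.eulerZ_eq_euler hβ.1, hβ.2.2]
  euler_pos α hα hα₀ := by
    have hsupp : ∀ v, v ∉ Q'.verts → α v = 0 := fun v hv =>
      Nat.le_zero.1 ((hα v).trans_eq (hβ.1 v hv))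
    rw [← hfull.eulerZ_eq_euler hsupp]
    refine hpos _ (fun v hv => by simp [hsupp v hv]) fun h => hα₀ (funext fun v => ?_)
    simpa using congrFun h v

lemma FinQuiver.IsDynkinRoot.sum_arrows_eq {Q : FinQuiver n} {β : Fin n → ℕ}
    (hβ : Q.IsDynkinRoot β) {i : Fin n} (hi : β i = 1) :
    ∑ a, β (Q.hd a) * β (Q.tl a) = ∑ v ∈ Finset.univ.erase i, β v * β v := by
  have h := hβ.euler_self
  rw [FinQuiver.euler, ← Finset.add_sum_erase _ _ (Finset.mem_univ i), hi] at h
  zify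
  simp only [mul_comm (β (Q.hd _) : ℤ)]
  push_cast at h
  linarith

end EulerForm

section Blocks

variable {β : Fin n → ℕ} {r s : ℕ} {S : Fin n → Finset ℕ}

/-- The dimension vector recording how many elements of `S v` lie in the `b`-th block at `v`. -/
def blockCount (β : Fin n → ℕ) (S : Fin n → Finset ℕ) (b : ℕ) (v : Fin n) : ℕ :=
  Finset.card {j ∈ S v | j / β v = b}

/-- The union, at each vertex, of the first `N` blocks whose position lies in `T`. -/
def blockUnion (β : Fin n → ℕ) (N : ℕ) (T : Finset ℕ) (v : Fin n) : Finset ℕ :=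
  {j ∈ Finset.range (N * β v) | j / β v ∈ T}

lemma div_mem_range {j m N : ℕ} (hj : j ∈ Finset.range (N * m)) : j / m ∈ Finset.range N :=
  Finset.mem_range.2 (Nat.div_lt_of_lt_mul (by rwa [mul_comm m, ← Finset.mem_range]))

lemma card_filter_div_eq {m N b : ℕ} (hb : b < N) :
    Finset.card {j ∈ Finset.range (N * m) | j / m = b} = m := by
  rcases Nat.eq_zero_or_pos m with rfl | hm
  · simp
  have hIco : {j ∈ Finset.range (N * m) | j / m = b} = Finset.Ico (b * m) ((b + 1) * m) := by
    ext j
    have : (b + 1) * m ≤ N * m := Nat.mul_le_mul_right _ hb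
    rw [Finset.mem_filter, Finset.mem_range, Finset.mem_Ico, Nat.div_eq_iff hm]
    rw [add_mul] at *
    omega
  rw [hIco, Nat.card_Ico, add_mul]
  omega

lemma subset_range_mul (hS : S ∈ shuffles (r • β) (s • β)) (v : Fin n) :
    S v ⊆ Finset.range ((r + s) * β v) :=
  (mem_shuffles.1 hS v).1.trans_eq (by simp [add_mul])

lemma shuffleCompl_smul (β : Fin n → ℕ) (r s : ℕ) (S : Fin n → Finset ℕ) (v : Fin n) :
    shuffleCompl (r • β) (s • β) S v = Finset.range ((r + s) * β v) \ S v := by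
  simp [shuffleCompl, add_mul]

lemma blockCount_shuffleCompl_add (hS : S ∈ shuffles (r • β) (s • β)) {b : ℕ} (hb : b < r + s) :
    blockCount β (shuffleCompl (r • β) (s • β) S) b + blockCount β S b = β := by
  funext v
  rw [Pi.add_apply, blockCount, blockCount, shuffleCompl_smul, ← Finset.card_union_of_disjoint
    (Finset.disjoint_filter_filter Finset.sdiff_disjoint), ← Finset.filter_union,
    Finset.sdiff_union_of_subset (subset_range_mul hS v), card_filter_div_eq hb]

lemma sum_blockCount (hS : S ∈ shuffles (r • β) (s • β)) :
    ∑ b ∈ Finset.range (r + s), blockCount β S b = r • β := by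
  funext v
  rw [Finset.sum_apply, ← (mem_shuffles.1 hS v).2]
  exact (Finset.card_eq_sum_card_fiberwise fun j hj =>
    div_mem_range (subset_range_mul hS v hj)).symm

lemma card_blockPairs_crossPairs (S : Fin n → Finset ℕ) (v w : Fin n) :
    (blockPairs β v w (crossPairs (r • β) (s • β) S v w)).card =
      ∑ b ∈ Finset.range (r + s),
        blockCount β (shuffleCompl (r • β) (s • β) S) b v * blockCount β S b w := by
  rw [Finset.card_eq_sum_card_fiberwise (f := fun x => x.1 / β v) (t := Finset.range (r + s))]
  · refine Finset.sum_congr rfl fun b _ => ?_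
    rw [blockCount, blockCount, ← Finset.card_product]
    congr 1
    ext x
    simp only [blockPairs, crossPairs, Finset.mem_filter, Finset.mem_product]
    grind
  · intro x hx
    have hx₁ := (Finset.mem_product.1 (Finset.mem_filter.1 hx).1).1
    rw [shuffleCompl_smul] at hx₁
    exact div_mem_range (Finset.mem_sdiff.1 hx₁).1

lemma div_mem_of_mem_blockUnion {N : ℕ} {T : Finset ℕ} {v : Fin n} {j : ℕ}
    (hj : j ∈ blockUnion β N T v) : j / β v ∈ T :=
  (Finset.mem_filter.1 hj).2

lemma card_filter_blockUnion {N : ℕ} {T : Finset ℕ} (hT : T ⊆ Finset.range N) {b : ℕ} (hb : b ∈ T)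
    (v : Fin n) : Finset.card {j ∈ blockUnion β N T v | j / β v = b} = β v := by
  refine Eq.trans ?_ (card_filter_div_eq (Finset.mem_range.1 (hT hb)))
  rw [blockUnion, Finset.filter_filter]
  exact congrArg _ (Finset.filter_congr fun j _ =>
    and_iff_right_of_imp fun h : j / β v = b => h ▸ hb)

lemma prod_blockUnion {M : Type*} [CommMonoid M] {N : ℕ} {T : Finset ℕ}
    (hT : T ⊆ Finset.range N) (v : Fin n) (F : ℕ → M) :
    ∏ j ∈ blockUnion β N T v, F (j / β v) = (∏ b ∈ T, F b) ^ β v := by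
  rw [← Finset.prod_fiberwise_of_maps_to fun j => div_mem_of_mem_blockUnion, ← Finset.prod_pow]
  refine Finset.prod_congr rfl fun b hb => ?_
  rw [Finset.prod_congr rfl fun j hj => congrArg F (Finset.mem_filter.1 hj).2,
    Finset.prod_const, card_filter_blockUnion hT hb]

lemma card_blockUnion {N : ℕ} {T : Finset ℕ} (hT : T ⊆ Finset.range N) (v : Fin n) :
    (blockUnion β N T v).card = T.card * β v := by
  rw [Finset.card_eq_sum_card_fiberwise fun j => div_mem_of_mem_blockUnion,
    Finset.sum_congr rfl fun b hb => card_filter_blockUnion hT hb v, Finset.sum_const, smul_eq_mul]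

lemma shuffleCompl_blockUnion (β : Fin n → ℕ) (r s : ℕ) (T : Finset ℕ) :
    shuffleCompl (r • β) (s • β) (blockUnion β (r + s) T) =
      blockUnion β (r + s) (Finset.range (r + s) \ T) := by
  funext v
  ext j
  have hdiv := div_mem_range (j := j) (m := β v) (N := r + s)
  simp only [shuffleCompl_smul, blockUnion, Finset.mem_sdiff, Finset.mem_filter]
  tauto

lemma blockUnion_mem_shuffles {T : Finset ℕ} (hT : T ⊆ Finset.range (r + s)) (hcard : T.card = r)
    (β : Fin n → ℕ) : blockUnion β (r + s) T ∈ shuffles (r • β) (s • β) := by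
  refine mem_shuffles.2 fun v => ⟨(Finset.filter_subset _ _).trans_eq ?_, ?_⟩
  · simp [add_mul]
  · simp [card_blockUnion hT, hcard]

lemma blockUnion_apply_of_eq_one {N : ℕ} {T : Finset ℕ} (hT : T ⊆ Finset.range N) {i : Fin n}
    (hi : β i = 1) : blockUnion β N T i = T := by
  simpa [blockUnion, hi, Finset.filter_mem_eq_inter] using hT

lemma blockCount_apply_of_eq_one {i : Fin n} (hi : β i = 1) (S : Fin n → Finset ℕ) (b : ℕ) :
    blockCount β S b i = if b ∈ S i then 1 else 0 := by
  simp only [blockCount, hi, Nat.div_one, Finset.filter_eq']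
  split_ifs <;> simp

end Blocks

section LeadingTerm

variable {Q : FinQuiver n} {β : Fin n → ℕ} {r s : ℕ} {i : Fin n} {S : Fin n → Finset ℕ}

/-- The order in `t` guaranteed for the specialization of the numerator. -/
def numOrder (Q : FinQuiver n) (β γ₁ γ₂ : Fin n → ℕ) (S : Fin n → Finset ℕ) : ℕ :=
  ∑ a, (blockPairs β (Q.hd a) (Q.tl a) (crossPairs γ₁ γ₂ S (Q.hd a) (Q.tl a))).card

/-- The order in `t` of the specialization of `partialDen V γ₁ γ₂ S`. -/
def denOrder (V : Finset (Fin n)) (β γ₁ γ₂ : Fin n → ℕ) (S : Fin n → Finset ℕ) : ℕ :=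
  ∑ v ∈ V, (blockPairs β v v (crossPairs γ₁ γ₂ S v v)).card

lemma denOrder_sub_numOrder (Q : FinQuiver n) (hi : β i = 1)
    (hS : S ∈ shuffles (r • β) (s • β)) :
    (denOrder (Finset.univ.erase i) β (r • β) (s • β) S : ℤ) - numOrder Q β (r • β) (s • β) S =
      ∑ b ∈ Finset.range (r + s),
        Q.euler (blockCount β S b) (blockCount β (shuffleCompl (r • β) (s • β) S) b) := by
  have hvertex : (blockPairs β i i (crossPairs (r • β) (s • β) S i i)).card = 0 := by
    rw [card_blockPairs_crossPairs]
    refine Finset.sum_eq_zero fun b hb => ?_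
    have hsum := congrFun (blockCount_shuffleCompl_add hS (Finset.mem_range.1 hb)) i
    rw [Pi.add_apply, hi] at hsum
    rw [mul_eq_zero]
    omega
  have hden : denOrder (Finset.univ.erase i) β (r • β) (s • β) S =
      denOrder Finset.univ β (r • β) (s • β) S := by
    rw [denOrder, denOrder, ← Finset.add_sum_erase _ _ (Finset.mem_univ i), hvertex, zero_add]
  rw [hden, denOrder, numOrder]
  simp only [card_blockPairs_crossPairs, FinQuiver.euler, Finset.sum_sub_distrib]
  push_cast
  rw [Finset.sum_comm, Finset.sum_comm (s := Finset.univ (α := Q.Arr))]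
  simp only [mul_comm]

lemma FinQuiver.IsDynkinRoot.numOrder_sub_denOrder (hβ : Q.IsDynkinRoot β) (hi : β i = 1)
    (hS : S ∈ shuffles (r • β) (s • β)) :
    (numOrder Q β (r • β) (s • β) S : ℤ) - denOrder (Finset.univ.erase i) β (r • β) (s • β) S =
      ∑ b ∈ Finset.range (r + s),
        (Q.euler (blockCount β S b) (blockCount β S b) - blockCount β S b i) := by
  have hr : ∑ b ∈ Finset.range (r + s), Q.euler (blockCount β S b) β = r := by
    rw [← Q.euler_sum_left, sum_blockCount hS, Q.euler_smul_left, hβ.euler_self, mul_one]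
  have hri : ∑ b ∈ Finset.range (r + s), (blockCount β S b i : ℤ) = r := by
    have := congrFun (sum_blockCount hS) i
    rw [Finset.sum_apply, Pi.smul_apply, hi, smul_eq_mul, mul_one] at this
    exact_mod_cast this
  have hsplit : ∀ b ∈ Finset.range (r + s),
      Q.euler (blockCount β S b) (blockCount β (shuffleCompl (r • β) (s • β) S) b) =
        Q.euler (blockCount β S b) β - Q.euler (blockCount β S b) (blockCount β S b) := by
    intro b hb
    rw [eq_sub_iff_add_eq, ← Q.euler_add_right,
      blockCount_shuffleCompl_add hS (Finset.mem_range.1 hb)]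
  have h := denOrder_sub_numOrder Q hi hS
  rw [Finset.sum_congr rfl hsplit, Finset.sum_sub_distrib, hr] at h
  rw [Finset.sum_sub_distrib, hri]
  linarith

lemma FinQuiver.IsDynkinRoot.apply_le_euler (hβ : Q.IsDynkinRoot β) (hi : β i = 1)
    {α : Fin n → ℕ} (hα : α ≤ β) : (α i : ℤ) ≤ Q.euler α α := by
  rcases eq_or_ne α 0 with rfl | hα₀
  · simp [FinQuiver.euler]
  · have hle : α i ≤ 1 := (hα i).trans_eq hi
    have hpos := hβ.euler_pos α hα hα₀
    omega

lemma blockCount_le (hS : S ∈ shuffles (r • β) (s • β)) {b : ℕ} (hb : b < r + s) :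
    blockCount β S b ≤ β := by
  conv_rhs => rw [← blockCount_shuffleCompl_add hS hb]
  exact le_add_of_nonneg_left (fun _ => Nat.zero_le _)

lemma eq_blockUnion_of_forall_blockCount_eq_zero (hi : β i = 1)
    (hS : S ∈ shuffles (r • β) (s • β))
    (hzero : ∀ b < r + s, b ∉ S i → blockCount β S b = 0) : S = blockUnion β (r + s) (S i) := by
  have hSi : S i ⊆ Finset.range (r + s) := by simpa [hi] using subset_range_mul hS i
  funext v
  refine Finset.eq_of_subset_of_card_le (fun j hj => ?_) ?_
  · have hj' := subset_range_mul hS v hj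
    refine Finset.mem_filter.2 ⟨hj', by_contra fun hnot => ?_⟩
    have hcard := congrFun (hzero _ (Finset.mem_range.1 (div_mem_range hj')) hnot) v
    exact Finset.filter_eq_empty_iff.1 (Finset.card_eq_zero.1 hcard) hj rfl
  · simp [card_blockUnion hSi, (mem_shuffles.1 hS _).2, hi]

lemma FinQuiver.IsDynkinRoot.denOrder_le_numOrder (hβ : Q.IsDynkinRoot β) (hi : β i = 1)
    (hS : S ∈ shuffles (r • β) (s • β)) :
    denOrder (Finset.univ.erase i) β (r • β) (s • β) S ≤ numOrder Q β (r • β) (s • β) S := by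
  have h := hβ.numOrder_sub_denOrder hi hS
  have hnonneg := Finset.sum_nonneg fun b hb => sub_nonneg.2
    (hβ.apply_le_euler hi (blockCount_le hS (Finset.mem_range.1 hb)))
  omega

lemma FinQuiver.IsDynkinRoot.eq_blockUnion_of_denOrder_eq_numOrder (hβ : Q.IsDynkinRoot β)
    (hi : β i = 1) (hS : S ∈ shuffles (r • β) (s • β))
    (heq : denOrder (Finset.univ.erase i) β (r • β) (s • β) S = numOrder Q β (r • β) (s • β) S) :
    S = blockUnion β (r + s) (S i) := by
  have h := hβ.numOrder_sub_denOrder hi hS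
  rw [heq, sub_self, eq_comm, Finset.sum_eq_zero_iff_of_nonneg fun b hb => sub_nonneg.2
    (hβ.apply_le_euler hi (blockCount_le hS (Finset.mem_range.1 hb)))] at h
  refine eq_blockUnion_of_forall_blockCount_eq_zero hi hS fun b hb hbi => by_contra fun hne => ?_
  have hzero := h b (Finset.mem_range.2 hb)
  have hpos := hβ.euler_pos _ (blockCount_le hS hb) hne
  rw [blockCount_apply_of_eq_one hi, if_neg hbi] at hzero
  omega

end LeadingTerm

section PartialSumEvaluation

open PowerSeries (constantCoeff)

variable {Q : FinQuiver n} {β γ₁ γ₂ : Fin n → ℕ} {r s : ℕ} {i : Fin n} {S : Fin n → Finset ℕ}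
  {T : Finset ℕ}

lemma X_pow_numOrder_dvd (Q : FinQuiver n) (β γ₁ γ₂ : Fin n → ℕ) (S : Fin n → Finset ℕ) :
    PowerSeries.X ^ numOrder Q β γ₁ γ₂ S ∣ blockSpec β (interactionNum Q γ₁ γ₂ S) := by
  rw [interactionNum_eq_prod_diffProd, map_prod, numOrder, ← Finset.prod_pow_eq_pow_sum]
  exact Finset.prod_dvd_prod_of_dvd _ _ fun a _ => X_pow_card_blockPairs_dvd _ _ _ _

lemma associated_blockSpec_partialDen (V : Finset (Fin n)) (β : Fin n → ℕ)
    (hS : S ∈ shuffles γ₁ γ₂) :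
    Associated (blockSpec β (partialDen V γ₁ γ₂ S))
      (PowerSeries.X ^ denOrder V β γ₁ γ₂ S) := by
  rw [partialDen, map_prod, denOrder, ← Finset.prod_pow_eq_pow_sum]
  exact Associated.prod _ _ _ fun v _ => associated_blockSpec_diffProd_self β v fun x hx =>
    (Finset.mem_offDiag.1 (crossPairs_subset_offDiag hS v hx)).2.2

lemma blockSpec_vertexDisc_ne_zero (V : Finset (Fin n)) (β N : Fin n → ℕ) :
    blockSpec β (vertexDisc V N) ≠ 0 := by
  rw [vertexDisc, map_prod, Finset.prod_ne_zero_iff]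
  intro v _
  rw [(associated_blockSpec_diffProd_self β v fun x hx =>
    (Finset.mem_offDiag.1 hx).2.2).ne_zero_iff]
  exact pow_ne_zero _ PowerSeries.X_ne_zero

lemma constantCoeff_blockSpec_crossPairs_blockUnion (β : Fin n → ℕ)
    (hT : T ⊆ Finset.range (r + s)) (v w : Fin n) :
    constantCoeff (blockSpec β
        (diffProd v w (crossPairs (r • β) (s • β) (blockUnion β (r + s) T) v w))) =
      (∏ b' ∈ Finset.range (r + s) \ T, ∏ b ∈ T, ((b' : ℚ) - b)) ^ (β v * β w) := by
  rw [constantCoeff_blockSpec_diffProd, crossPairs, shuffleCompl_blockUnion, Finset.prod_product,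
    mul_comm, pow_mul, ← Finset.prod_pow, ← prod_blockUnion Finset.sdiff_subset]
  exact Finset.prod_congr rfl fun x _ => prod_blockUnion hT w fun b => ((x / β v : ℕ) : ℚ) - b

lemma FinQuiver.IsDynkinRoot.constantCoeff_blockSpec_interactionNum (hβ : Q.IsDynkinRoot β)
    (hi : β i = 1) (hT : T ⊆ Finset.range (r + s)) :
    constantCoeff (blockSpec β (interactionNum Q (r • β) (s • β) (blockUnion β (r + s) T))) =
      constantCoeff (blockSpec β
        (partialDen (Finset.univ.erase i) (r • β) (s • β) (blockUnion β (r + s) T))) := by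
  simp only [interactionNum_eq_prod_diffProd, partialDen, map_prod,
    constantCoeff_blockSpec_crossPairs_blockUnion β hT, Finset.prod_pow_eq_pow_sum,
    hβ.sum_arrows_eq hi]

lemma constantCoeff_blockSpec_partialDen_ne_zero (V : Finset (Fin n)) (β : Fin n → ℕ)
    (hT : T ⊆ Finset.range (r + s)) :
    constantCoeff (blockSpec β
      (partialDen V (r • β) (s • β) (blockUnion β (r + s) T))) ≠ 0 := by
  simp only [partialDen, map_prod, constantCoeff_blockSpec_crossPairs_blockUnion β hT]
  refine Finset.prod_ne_zero_iff.2 fun v _ => pow_ne_zero _ <|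
    Finset.prod_ne_zero_iff.2 fun b' hb' => Finset.prod_ne_zero_iff.2 fun b hb =>
      sub_ne_zero.2 (Nat.cast_injective.ne ?_)
  exact (ne_of_mem_of_not_mem hb (Finset.mem_sdiff.1 hb').2).symm

lemma FinQuiver.IsDynkinRoot.exists_blockSpec_interactionNum_eq_mul (hβ : Q.IsDynkinRoot β)
    (hi : β i = 1) (hS : S ∈ shuffles (r • β) (s • β)) :
    ∃ w, blockSpec β (interactionNum Q (r • β) (s • β) S) =
        blockSpec β (partialDen (Finset.univ.erase i) (r • β) (s • β) S) * w ∧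
      constantCoeff w = if S = blockUnion β (r + s) (S i) then 1 else 0 := by
  have hnum := X_pow_numOrder_dvd Q β (r • β) (s • β) S
  have hden := associated_blockSpec_partialDen (Finset.univ.erase i) β hS
  have hle := hβ.denOrder_le_numOrder hi hS
  obtain ⟨w, hw⟩ := hden.dvd.trans ((pow_dvd_pow _ hle).trans hnum)
  refine ⟨w, hw, ?_⟩
  split_ifs with hblock
  · have hSi : S i ⊆ Finset.range (r + s) := by simpa [hi] using subset_range_mul hS i
    have hcoeff := hβ.constantCoeff_blockSpec_interactionNum hi hSi
    rw [← hblock, hw, map_mul] at hcoeff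
    refine (mul_eq_left₀ ?_).1 hcoeff
    rw [hblock]
    exact constantCoeff_blockSpec_partialDen_ne_zero _ β hSi
  · have hlt : denOrder (Finset.univ.erase i) β (r • β) (s • β) S <
        numOrder Q β (r • β) (s • β) S :=
      hle.lt_of_ne fun heq => hblock (hβ.eq_blockUnion_of_denOrder_eq_numOrder hi hS heq)
    have hpow := pow_dvd_pow (PowerSeries.X : PowerSeries ℚ) hlt
    rw [Nat.succ_eq_add_one, pow_succ] at hpow
    have hdvd := (mul_dvd_mul_right hden.dvd PowerSeries.X).trans (hpow.trans hnum)
    rw [hw] at hdvd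
    have hden₀ := hden.ne_zero_iff.2 (pow_ne_zero _ PowerSeries.X_ne_zero)
    exact PowerSeries.X_dvd_iff.1 ((mul_dvd_mul_iff_left hden₀).1 hdvd)

lemma FinQuiver.IsDynkinRoot.partialNum_eq (hβ : Q.IsDynkinRoot β) (hi : β i = 1)
    (hT : T ⊆ Finset.range (r + s)) (hcard : T.card = r) :
    partialNum Q (r • β) (s • β) i T =
      vertexDisc (Finset.univ.erase i) (r • β + s • β) := by
  set A : Finset (Fin n → Finset ℕ) := {S ∈ shuffles (r • β) (s • β) | S i = T}
  have hAS : ∀ S ∈ A, S ∈ shuffles (r • β) (s • β) ∧ S i = T := fun S => Finset.mem_filter.1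
  obtain ⟨c, hc⟩ := exists_partialNum_eq_mul_C (Q := Q) (γ₁ := r • β) (γ₂ := s • β) i T <| by
    simp only [Pi.smul_apply, smul_eq_mul, mul_mul_mul_comm, ← Finset.mul_sum]
    rw [hβ.sum_arrows_eq hi]
  choose! w hw hw₀ using fun S (hS : S ∈ A) =>
    hβ.exists_blockSpec_interactionNum_eq_mul hi (hAS S hS).1
  have hsum : ∑ S ∈ A, w S = PowerSeries.C c := by
    refine mul_left_cancel₀ (blockSpec_vertexDisc_ne_zero (Finset.univ.erase i) β
      (r • β + s • β)) ?_
    have hC : blockSpec β (C c) = PowerSeries.C c := (blockSpec β).commutes c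
    rw [← hC, ← map_mul, ← hc, partialNum, clearedSum, map_sum, Finset.mul_sum]
    refine Finset.sum_congr rfl fun S hS => ?_
    rw [map_mul, hw S hS, ← partialDen_mul_cofactor _ (hAS S hS).1, map_mul]
    ring
  have hmem : blockUnion β (r + s) T ∈ A :=
    Finset.mem_filter.2 ⟨blockUnion_mem_shuffles hT hcard β, blockUnion_apply_of_eq_one hT hi⟩
  have hc₁ : c = 1 := calc
    c = ∑ S ∈ A, constantCoeff (w S) := by
      rw [← map_sum, hsum, PowerSeries.constantCoeff_C]
    _ = ∑ S ∈ A, if S = blockUnion β (r + s) T then 1 else 0 :=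
      Finset.sum_congr rfl fun S hS => by rw [hw₀ S hS, (hAS S hS).2]
    _ = 1 := by rw [Finset.sum_ite_eq', if_pos hmem]
  rw [hc, hc₁, C_1, mul_one]

end PartialSumEvaluation

section VertexEmbed

variable {Q : FinQuiver n} {β γ₁ γ₂ : Fin n → ℕ} {δ₁ δ₂ : Fin 1 → ℕ} {r s : ℕ} {i : Fin n}
  {S : Fin n → Finset ℕ} {T : Fin 1 → Finset ℕ} {g₁ g₂ : PolyQ 1}

/-- The substitution `x_b ↦ ω_{i,b}` identifying `ℋ(A₁)` with polynomials at the vertex `i`. -/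
noncomputable def vertexEmbed (i : Fin n) : PolyQ 1 →ₐ[ℚ] PolyQ n :=
  rename fun p : Fin 1 × ℕ => (i, p.2)

lemma vertexEmbed_injective (i : Fin n) : Function.Injective (vertexEmbed i) :=
  rename_injective _ fun _ _ h => Prod.ext (Subsingleton.elim _ _) (Prod.mk.inj h).2

lemma vertexEmbed_aeval (i : Fin n) (f : Polynomial ℚ) :
    vertexEmbed i (Polynomial.aeval (X (0, 0)) f) = Polynomial.aeval (X (i, 0)) f := by
  rw [← Polynomial.aeval_algHom_apply, vertexEmbed, rename_X]

lemma substAlong_vertexEmbed (h : S i = T 0) (g : PolyQ 1) :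
    substAlong S (vertexEmbed i g) = vertexEmbed i (substAlong T g) := by
  rw [substAlong_eq_rename, substAlong_eq_rename, vertexEmbed, rename_rename, rename_rename]
  congr 2
  funext ⟨a, j⟩
  rw [Subsingleton.elim a 0]
  simp only [Function.comp_apply, relabel, enumerate, h]

/-- The extension of `vertexEmbed i` to rational functions. -/
noncomputable def vertexEmbedFrac (i : Fin n) :
    FractionRing (PolyQ 1) →+* FractionRing (PolyQ n) :=
  IsFractionRing.map (j := (vertexEmbed i : PolyQ 1 →+* PolyQ n)) (vertexEmbed_injective i)

lemma vertexEmbedFrac_algebraMap (i : Fin n) (f : PolyQ 1) :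
    vertexEmbedFrac i (algebraMap (PolyQ 1) (FractionRing (PolyQ 1)) f) =
      algebraMap (PolyQ n) (FractionRing (PolyQ n)) (vertexEmbed i f) :=
  IsLocalization.map_eq (nonZeroDivisors_le_comap_nonZeroDivisors_of_injective _
    (vertexEmbed_injective i)) f

lemma interactionNum_A1 (δ₁ δ₂ : Fin 1 → ℕ) (T : Fin 1 → Finset ℕ) :
    interactionNum A1 δ₁ δ₂ T = 1 :=
  Fintype.prod_empty (ι := Empty) _

lemma shuffleCompl_eq_of_apply_eq (h₁ : γ₁ i = δ₁ 0) (h₂ : γ₂ i = δ₂ 0) (hST : S i = T 0) :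
    shuffleCompl γ₁ γ₂ S i = shuffleCompl δ₁ δ₂ T 0 := by
  rw [shuffleCompl, shuffleCompl, h₁, h₂, hST]

lemma interactionDen_eq_vertexEmbed_mul_partialDen (h₁ : γ₁ i = δ₁ 0) (h₂ : γ₂ i = δ₂ 0)
    (hST : S i = T 0) : interactionDen γ₁ γ₂ S =
      vertexEmbed i (interactionDen δ₁ δ₂ T) * partialDen (Finset.univ.erase i) γ₁ γ₂ S := by
  rw [interactionDen_eq_partialDen, partialDen, partialDen,
    ← Finset.mul_prod_erase _ _ (Finset.mem_univ i)]
  congr 1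
  simp only [interactionDen, Fin.prod_univ_one, map_prod, map_sub, vertexEmbed, rename_X, diffProd,
    crossPairs, Finset.prod_product, shuffleCompl_eq_of_apply_eq h₁ h₂ hST, hST]

lemma cohaSummand_div_interactionDen_vertexEmbed (Q : FinQuiver n) (h₁ : γ₁ i = δ₁ 0)
    (h₂ : γ₂ i = δ₂ 0) (hST : S i = T 0) (g₁ g₂ : PolyQ 1) :
    algebraMap (PolyQ n) (FractionRing (PolyQ n))
        (cohaSummand Q γ₁ γ₂ (vertexEmbed i g₁) (vertexEmbed i g₂) S) /
        algebraMap (PolyQ n) (FractionRing (PolyQ n)) (interactionDen γ₁ γ₂ S) =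
      vertexEmbedFrac i
          (algebraMap (PolyQ 1) (FractionRing (PolyQ 1)) (cohaSummand A1 δ₁ δ₂ g₁ g₂ T) /
            algebraMap (PolyQ 1) (FractionRing (PolyQ 1)) (interactionDen δ₁ δ₂ T)) *
        (algebraMap (PolyQ n) (FractionRing (PolyQ n)) (interactionNum Q γ₁ γ₂ S) /
          algebraMap (PolyQ n) (FractionRing (PolyQ n))
            (partialDen (Finset.univ.erase i) γ₁ γ₂ S)) := by
  rw [cohaSummand, cohaSummand, interactionNum_A1, mul_one, substAlong_vertexEmbed hST,
    substAlong_vertexEmbed (shuffleCompl_eq_of_apply_eq h₁ h₂ hST),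
    interactionDen_eq_vertexEmbed_mul_partialDen h₁ h₂ hST, map_div₀, vertexEmbedFrac_algebraMap,
    vertexEmbedFrac_algebraMap, map_mul (vertexEmbed i)]
  simp only [map_mul, mul_div_mul_comm]

lemma FinQuiver.IsDynkinRoot.sum_interactionNum_div_partialDen (hβ : Q.IsDynkinRoot β)
    (hi : β i = 1) {U : Finset ℕ} (hU : U ⊆ Finset.range (r + s)) (hcard : U.card = r) :
    ∑ S ∈ shuffles (r • β) (s • β) with S i = U,
      algebraMap (PolyQ n) (FractionRing (PolyQ n)) (interactionNum Q (r • β) (s • β) S) /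
        algebraMap (PolyQ n) (FractionRing (PolyQ n))
          (partialDen (Finset.univ.erase i) (r • β) (s • β) S) = 1 := by
  rw [sum_div_partialDen _ (Finset.filter_subset _ _) (interactionNum Q (r • β) (s • β))]
  have hnum := hβ.partialNum_eq hi hU hcard
  rw [partialNum] at hnum
  rw [hnum, div_self (by simpa using vertexDisc_ne_zero _ _)]

lemma FinQuiver.IsDynkinRoot.cohaMulRat_vertexEmbed (hβ : Q.IsDynkinRoot β) (hi : β i = 1)
    (r s : ℕ) (g₁ g₂ : PolyQ 1) :
    cohaMulRat Q (r • β) (s • β) (vertexEmbed i g₁) (vertexEmbed i g₂) =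
      vertexEmbedFrac i (cohaMulRat A1 (fun _ => r) (fun _ => s) g₁ g₂) := by
  have hscale (k : ℕ) : (k • β) i = k := by simp [hi]
  have hmaps : ∀ S ∈ shuffles (r • β) (s • β),
      (fun _ : Fin 1 => S i) ∈ shuffles (fun _ => r) fun _ => s := fun S hS =>
    mem_shuffles.2 fun _ => by simpa [hi] using mem_shuffles.1 hS i
  simp only [cohaMulRat, map_sum, ← cohaSummand.eq_def]
  rw [← Finset.sum_fiberwise_of_maps_to hmaps]
  refine Finset.sum_congr rfl fun T hT => ?_
  obtain ⟨hsub, hcard⟩ := mem_shuffles.1 hT 0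
  have hfiber (S : Fin n → Finset ℕ) : (fun _ : Fin 1 => S i) = T ↔ S i = T 0 := by
    simp [funext_iff]
  rw [Finset.filter_congr fun S _ => hfiber S, Finset.sum_congr rfl fun S hS =>
      cohaSummand_div_interactionDen_vertexEmbed (δ₁ := fun _ => r) (δ₂ := fun _ => s) Q
        (hscale r) (hscale s) (Finset.mem_filter.1 hS).2 g₁ g₂,
    ← Finset.mul_sum, hβ.sum_interactionNum_div_partialDen hi hsub hcard, mul_one]

lemma FinQuiver.IsDynkinRoot.vertexEmbed_cohaMul (hβ : Q.IsDynkinRoot β) (hi : β i = 1)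
    (hg₁ : g₁ ∈ Hspace fun _ => r) (hg₂ : g₂ ∈ Hspace fun _ => s) :
    vertexEmbed i (cohaMul A1 (fun _ => r) (fun _ => s) g₁ g₂) =
      cohaMul Q (r • β) (s • β) (vertexEmbed i g₁) (vertexEmbed i g₂) := by
  refine (cohaMul_eq_of_algebraMap_eq ?_).symm
  rw [hβ.cohaMulRat_vertexEmbed hi, ← algebraMap_cohaMul A1 hg₁ hg₂, vertexEmbedFrac_algebraMap]

end VertexEmbed

section IteratedProducts

variable {Q : FinQuiver n} {β : Fin n → ℕ} {i : Fin n} {r : ℕ}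

lemma cohaProd_fst (Q : FinQuiver n) (l : List ((Fin n → ℕ) × PolyQ n)) :
    (cohaProd Q l).1 = (l.map Prod.fst).sum := by
  rcases l with _ | ⟨x, l⟩
  · rfl
  induction l generalizing x with
  | nil => simp [cohaProd]
  | cons y l ih => exact (ih _).trans (by simp [add_assoc])

lemma cohaProd_concat (Q : FinQuiver n) (l : List ((Fin n → ℕ) × PolyQ n))
    {y : (Fin n → ℕ) × PolyQ n} (hy : y.2 ∈ Hspace y.1) :
    cohaProd Q (l.concat y) =
      ((cohaProd Q l).1 + y.1, cohaMul Q (cohaProd Q l).1 y.1 (cohaProd Q l).2 y.2) := by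
  rcases l with _ | ⟨x, l⟩
  · exact Prod.ext (zero_add y.1).symm (cohaMul_zero_one Q hy).symm
  · simp [cohaProd]

lemma cohaProdFin_succ (Q : FinQuiver n) {γ : Fin (r + 1) → Fin n → ℕ}
    {f : Fin (r + 1) → PolyQ n} (hf : f (Fin.last r) ∈ Hspace (γ (Fin.last r))) :
    cohaProdFin Q γ f = cohaMul Q (∑ u : Fin r, γ u.castSucc) (γ (Fin.last r))
      (cohaProdFin Q (fun u => γ u.castSucc) fun u => f u.castSucc) (f (Fin.last r)) := by
  rw [cohaProdFin, List.ofFn_succ', cohaProd_concat Q _ hf, cohaProd_fst, List.map_ofFn,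
    List.sum_ofFn]
  rfl

lemma aeval_X_mem_Hspace (hi : β i = 1) (p : Polynomial ℚ) :
    Polynomial.aeval (X (i, 0)) p ∈ Hspace β := by
  refine ⟨fun q hq => ?_, fun v σ hσ => ?_⟩
  · have hX : (X (i, 0) : PolyQ n) ∈ supportedBelow β :=
      X_mem_supported.2 (show 0 < β i from hi ▸ one_pos)
    exact mem_supported.1 (Algebra.adjoin_le (Set.singleton_subset_iff.2 hX)
      (Polynomial.aeval_mem_adjoin_singleton ℚ _)) hq
  · rw [← Polynomial.aeval_algHom_apply, rename_X, vertexPerm]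
    split_ifs with hv
    · obtain rfl : i = v := hv
      have hσ₀ : σ 0 = 0 := by
        by_contra h
        exact h (Nat.lt_one_iff.1 (hi ▸ hσ (σ 0) (σ.injective.ne h)))
      rw [hσ₀]
    · rfl

/-- The iterated product `f₁(ω_{i,1}) * ⋯ * f_r(ω_{i,1})` of elements of `ℋ_β`. -/
noncomputable def genProd (Q : FinQuiver n) (β : Fin n → ℕ) (i : Fin n)
    (f : Fin r → Polynomial ℚ) : PolyQ n :=
  cohaProdFin Q (fun _ => β) fun u => Polynomial.aeval (X (i, 0)) (f u)

lemma genProd_zero (Q : FinQuiver n) (β : Fin n → ℕ) (i : Fin n) (f : Fin 0 → Polynomial ℚ) :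
    genProd Q β i f = 1 :=
  rfl

lemma genProd_succ (Q : FinQuiver n) (hi : β i = 1) (f : Fin (r + 1) → Polynomial ℚ) :
    genProd Q β i f = cohaMul Q (r • β) β (genProd Q β i fun u => f u.castSucc)
      (Polynomial.aeval (X (i, 0)) (f (Fin.last r))) := by
  rw [genProd, cohaProdFin_succ (γ := fun _ => β)
      (f := fun u => Polynomial.aeval (X (i, 0)) (f u)) Q (aeval_X_mem_Hspace hi _),
    Finset.sum_const, Finset.card_univ, Fintype.card_fin, genProd]

lemma genProd_mem_Hspace (Q : FinQuiver n) (hi : β i = 1) (f : Fin r → Polynomial ℚ) :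
    genProd Q β i f ∈ Hspace (r • β) := by
  induction r with
  | zero => exact one_mem_Hspace _
  | succ r ih =>
    rw [genProd_succ Q hi, succ_nsmul]
    exact cohaMul_mem_Hspace Q (ih _) (aeval_X_mem_Hspace hi _)

lemma smul_oneDim (r : ℕ) : r • oneDim = fun _ => r :=
  funext fun _ => mul_one r

lemma genProd_A1_mem_Hspace (f : Fin r → Polynomial ℚ) :
    genProd A1 oneDim 0 f ∈ Hspace fun _ => r :=
  smul_oneDim r ▸ genProd_mem_Hspace A1 rfl f

lemma genProd_A1_succ (f : Fin (r + 1) → Polynomial ℚ) :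
    genProd A1 oneDim 0 f = cohaMul A1 (fun _ => r) oneDim
      (genProd A1 oneDim 0 fun u => f u.castSucc)
      (Polynomial.aeval (X (0, 0)) (f (Fin.last r))) := by
  rw [genProd_succ A1 rfl, smul_oneDim]

lemma FinQuiver.IsDynkinRoot.genProd_eq_vertexEmbed (hβ : Q.IsDynkinRoot β) (hi : β i = 1)
    (f : Fin r → Polynomial ℚ) :
    genProd Q β i f = vertexEmbed i (genProd A1 oneDim 0 f) := by
  induction r with
  | zero => rw [genProd_zero, genProd_zero, map_one]
  | succ r ih =>
    have hmul := hβ.vertexEmbed_cohaMul (s := 1) hi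
      (genProd_A1_mem_Hspace fun u : Fin r => f u.castSucc)
      (aeval_X_mem_Hspace (i := 0) rfl (f (Fin.last r)))
    rw [one_smul, vertexEmbed_aeval] at hmul
    rw [genProd_succ Q hi, genProd_A1_succ, ih]
    exact hmul.symm

lemma FinQuiver.IsDynkinRoot.mem_vars_genProd (hβ : Q.IsDynkinRoot β) (hi : β i = 1)
    (f : Fin r → Polynomial ℚ) {p : Fin n × ℕ} (hp : p ∈ (genProd Q β i f).vars) :
    p.1 = i ∧ p.2 < r := by
  rw [hβ.genProd_eq_vertexEmbed hi] at hp
  obtain ⟨q, hq, rfl⟩ := mem_vars_rename _ _ hp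
  exact ⟨rfl, (genProd_A1_mem_Hspace f).1 q hq⟩

end IteratedProducts

section Generation

variable {r l : ℕ} {g h : PolyQ 1}

/-- A polynomial in `x₀, …, x_r` regarded as a polynomial in `x_r` with coefficients in
`ℚ[x₀, …, x_{r-1}]`; every variable from `x_r` on is sent to the new indeterminate. -/
noncomputable def splitLast (r : ℕ) : PolyQ 1 →ₐ[ℚ] Polynomial (PolyQ 1) :=
  aeval fun p => if p.2 < r then Polynomial.C (X p) else Polynomial.X

lemma splitLast_X (r : ℕ) (p : Fin 1 × ℕ) :
    splitLast r (X p) = if p.2 < r then Polynomial.C (X p) else Polynomial.X :=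
  aeval_X _ p

lemma coeff_splitLast_mem_supportedBelow (r : ℕ) (h : PolyQ 1) (k : ℕ) :
    (splitLast r h).coeff k ∈ supportedBelow fun _ => r := by
  induction h using MvPolynomial.induction_on generalizing k with
  | C a =>
    rw [algHom_C, Polynomial.algebraMap_apply, Polynomial.coeff_C]
    split_ifs
    exacts [Subalgebra.algebraMap_mem _ a, zero_mem _]
  | add f g hf hg =>
    rw [map_add, Polynomial.coeff_add]
    exact add_mem (hf k) (hg k)
  | mul_X f p hf =>
    rw [map_mul, splitLast_X]
    split_ifs with hp
    · rw [Polynomial.coeff_mul_C]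
      exact mul_mem (hf k) (X_mem_supported.2 hp)
    · rcases k with _ | k
      · rw [Polynomial.coeff_mul_X_zero]
        exact zero_mem _
      · rw [Polynomial.coeff_mul_X]
        exact hf k

lemma apply_lt_iff_of_forall_ne_lt {σ : Equiv.Perm ℕ} (hσ : ∀ j, σ j ≠ j → j < r) (j : ℕ) :
    σ j < r ↔ j < r := by
  rcases eq_or_ne (σ j) j with hj | hj
  · rw [hj]
  · exact iff_of_true (hσ _ (σ.injective.ne hj)) (hσ j hj)

lemma splitLast_rename_vertexPerm (v : Fin 1) {σ : Equiv.Perm ℕ} (hσ : ∀ j, σ j ≠ j → j < r)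
    (h : PolyQ 1) : splitLast r (rename (vertexPerm v σ) h) =
      (splitLast r h).map (rename (vertexPerm v σ) : PolyQ 1 →ₐ[ℚ] PolyQ 1) := by
  have hcomp : (splitLast r).comp (rename (vertexPerm v σ)) =
      (Polynomial.mapAlgHom (rename (vertexPerm v σ))).comp (splitLast r) := by
    refine MvPolynomial.algHom_ext fun p => ?_
    have hp : vertexPerm v σ p = (v, σ p.2) := if_pos (Subsingleton.elim _ _)
    simp only [AlgHom.comp_apply, rename_X, splitLast_X, hp, apply_lt_iff_of_forall_ne_lt hσ]
    split_ifs <;> simp [hp]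
  exact DFunLike.congr_fun hcomp h

lemma coeff_splitLast_mem_Hspace (hh : h ∈ Hspace fun _ => r + 1) (k : ℕ) :
    (splitLast r h).coeff k ∈ Hspace fun _ => r := by
  refine ⟨fun p hp => mem_supported.1 (coeff_splitLast_mem_supportedBelow r h k) hp,
    fun v σ hσ => ?_⟩
  have hsymm := splitLast_rename_vertexPerm v hσ h
  rw [hh.2 v σ fun j hj => (hσ j hj).trans r.lt_succ_self] at hsymm
  conv_rhs => rw [hsymm, Polynomial.coeff_map]
  rfl

lemma eval₂_splitLast_eq_rename (S : Fin 1 → Finset ℕ) (r l : ℕ) (h : PolyQ 1) :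
    (splitLast r h).eval₂ (substAlong S : PolyQ 1 →+* PolyQ 1) (X (0, l)) =
      rename (relabel fun v j => if j < r then enumerate S v j else l) h := by
  induction h using MvPolynomial.induction_on with
  | C a => simp [algHom_C, Polynomial.algebraMap_apply]
  | add f g hf hg => rw [map_add, Polynomial.eval₂_add, hf, hg, map_add]
  | mul_X f p hf =>
    rw [map_mul, Polynomial.eval₂_mul, hf, map_mul, splitLast_X, rename_X, relabel]
    split_ifs
    · simp [substAlong_eq_rename, relabel]
    · rw [Polynomial.eval₂_X, Subsingleton.elim p.1 0]

/-- The index set `{0, …, r} ∖ {l}` at the only vertex of `A₁`. -/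
def allBut (r l : ℕ) : Fin 1 → Finset ℕ := fun _ => (Finset.range (r + 1)).erase l

lemma bijOn_enumerate_allBut (hl : l ∈ Finset.range (r + 1)) (v : Fin 1) :
    Set.BijOn (fun j => if j < r then enumerate (allBut r l) v j else l)
      (Set.Iio (r + 1)) (Set.Iio (r + 1)) := by
  have hcard : (allBut r l v).card = r := by
    rw [allBut, Finset.card_erase_of_mem hl, Finset.card_range, Nat.add_sub_cancel]
  have henum := enumerate_bijOn (allBut r l) v
  rw [hcard] at henum
  have hsource : Set.Iio (r + 1) = insert r (Set.Iio r) := Order.Iio_succ_eq_insert r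
  have htarget : Set.Iio (r + 1) = insert l (allBut r l v : Set ℕ) := by
    rw [allBut, ← Finset.coe_insert, Finset.insert_erase hl, Finset.coe_range]
  have hinsert := (henum.congr (f₂ := fun j => if j < r then enumerate (allBut r l) v j else l)
    fun j hj => (if_pos hj).symm).insert (a := r) (by simp [allBut])
  simpa only [lt_irrefl, if_false, ← hsource, ← htarget] using hinsert

lemma eval₂_splitLast (hh : h ∈ Hspace fun _ => r + 1) (hl : l ∈ Finset.range (r + 1)) :
    (splitLast r h).eval₂ (substAlong (allBut r l) : PolyQ 1 →+* PolyQ 1) (X (0, l)) = h := by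
  have hid : rename (relabel fun _ => id) h = h := rename_id_apply h
  rw [eval₂_splitLast_eq_rename]
  conv_rhs => rw [← hid]
  exact rename_relabel_eq_of_bijOn hh (bijOn_enumerate_allBut hl) fun _ => Set.bijOn_id _

lemma sum_pow_div_prod_sub {F ι : Type*} [Field F] [DecidableEq ι] {s : Finset ι} {v : ι → F}
    (hs : s.Nonempty) (hv : Set.InjOn v s) :
    ∑ l ∈ s, v l ^ (s.card - 1) / ∏ j ∈ s.erase l, (v l - v j) = 1 := by
  have hdeg : (Polynomial.X ^ (s.card - 1) : Polynomial F).degree < s.card := by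
    rw [Polynomial.degree_X_pow]
    exact_mod_cast Nat.sub_lt hs.card_pos one_pos
  simpa using (Lagrange.coeff_eq_sum hv hdeg).symm

lemma shuffles_one_right (r : ℕ) :
    shuffles (fun _ : Fin 1 => r) oneDim = (Finset.range (r + 1)).image (allBut r) := by
  ext S
  simp only [Finset.mem_image]
  refine ⟨fun hS => ?_, ?_⟩
  · obtain ⟨l, hl⟩ := Finset.card_eq_one.1 (card_shuffleCompl hS 0)
    have hlmem : l ∈ shuffleCompl (fun _ => r) oneDim S 0 := hl ▸ Finset.mem_singleton_self l
    refine ⟨l, (Finset.mem_sdiff.1 hlmem).1, funext fun v => ?_⟩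
    rw [Subsingleton.elim v 0, ← Finset.sdiff_sdiff_eq_self (mem_shuffles.1 hS 0).1, allBut,
      ← Finset.sdiff_singleton_eq_erase, ← hl]
    rfl
  · rintro ⟨l, hl, rfl⟩
    refine mem_shuffles.2 fun v => ⟨Finset.erase_subset _ _, ?_⟩
    rw [allBut, Finset.card_erase_of_mem hl, Finset.card_range, Nat.add_sub_cancel]

lemma shuffleCompl_allBut (hl : l ∈ Finset.range (r + 1)) :
    shuffleCompl (fun _ => r) oneDim (allBut r l) = fun _ => {l} :=
  funext fun _ => Finset.sdiff_erase_self hl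

lemma cohaMulRat_A1_one_right (r : ℕ) (g f : PolyQ 1) :
    cohaMulRat A1 (fun _ => r) oneDim g f = ∑ l ∈ Finset.range (r + 1),
      algebraMap (PolyQ 1) (FractionRing (PolyQ 1))
        (substAlong (allBut r l) g * substAlong (fun _ => {l}) f) /
      ∏ j ∈ (Finset.range (r + 1)).erase l,
        (algebraMap (PolyQ 1) (FractionRing (PolyQ 1)) (X (0, l)) -
          algebraMap (PolyQ 1) (FractionRing (PolyQ 1)) (X (0, j))) := by
  rw [cohaMulRat, shuffles_one_right, Finset.sum_image fun a ha b hb hab =>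
    Finset.erase_injOn _ ha hb (congrFun hab 0)]
  refine Finset.sum_congr rfl fun l hl => ?_
  rw [shuffleCompl_allBut hl, interactionNum_A1, mul_one, interactionDen, Fin.prod_univ_one,
    shuffleCompl_allBut hl, Finset.prod_singleton, map_prod]
  simp only [map_sub, allBut]

lemma algebraMap_X_injOn (s : Set ℕ) : Set.InjOn (fun l : ℕ =>
    algebraMap (PolyQ 1) (FractionRing (PolyQ 1)) (X (0, l))) s := fun _ _ _ _ hab =>
  (Prod.mk.inj (X_injective (IsFractionRing.injective _ _ hab))).2

lemma substAlong_singleton_X_pow (l k : ℕ) :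
    substAlong (fun _ : Fin 1 => {l}) (X (0, 0) ^ k) = X (0, l) ^ k := by
  simp [substAlong]

-- Summing over `k` first turns the localization sum into `h` times the Lagrange identity
-- `∑_l x_l ^ r / ∏_{j ≠ l} (x_l - x_j) = 1`.
lemma sum_cohaMul_coeff_splitLast (hh : h ∈ Hspace fun _ => r + 1) :
    ∑ k ∈ Finset.range ((splitLast r h).natDegree + 1),
      cohaMul A1 (fun _ => r) oneDim ((splitLast r h).coeff k) (X (0, 0) ^ (k + r)) = h := by
  apply IsFractionRing.injective (PolyQ 1) (FractionRing (PolyQ 1))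
  have hpow (k : ℕ) : (X (0, 0) ^ k : PolyQ 1) ∈ Hspace oneDim := by
    simpa using aeval_X_mem_Hspace (i := 0) (β := oneDim) rfl (Polynomial.X ^ k)
  rw [map_sum, Finset.sum_congr rfl fun k _ =>
    algebraMap_cohaMul A1 (coeff_splitLast_mem_Hspace hh k) (hpow (k + r))]
  simp only [cohaMulRat_A1_one_right, substAlong_singleton_X_pow]
  rw [Finset.sum_comm]
  have hsum : ∀ l ∈ Finset.range (r + 1), ∑ k ∈ Finset.range ((splitLast r h).natDegree + 1),
      substAlong (allBut r l) ((splitLast r h).coeff k) * X (0, l) ^ (k + r) =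
        h * X (0, l) ^ r := fun l hl => by
    conv_rhs => rw [← eval₂_splitLast hh hl, Polynomial.eval₂_eq_sum_range, Finset.sum_mul]
    exact Finset.sum_congr rfl fun k _ => by rw [pow_add, mul_assoc]; rfl
  rw [Finset.sum_congr rfl fun l hl => by
    rw [← Finset.sum_div, ← map_sum, hsum l hl, map_mul, map_pow, mul_div_assoc], ← Finset.mul_sum]
  have hlagrange := sum_pow_div_prod_sub (Finset.nonempty_range_add_one (n := r))
    (algebraMap_X_injOn _)
  rw [Finset.card_range, Nat.add_sub_cancel] at hlagrange
  rw [hlagrange, mul_one]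

/-- The degree-`r` part of the subalgebra of `ℋ(A₁)` generated by `ℋ₁(A₁)`. -/
noncomputable def genSpan (r : ℕ) : Submodule ℚ (PolyQ 1) :=
  Submodule.span ℚ (Set.range fun f : Fin r → Polynomial ℚ => genProd A1 oneDim 0 f)

lemma genSpan_le_Hspace (r : ℕ) : genSpan r ≤ Hspace fun _ => r :=
  Submodule.span_le.2 (Set.range_subset_iff.2 genProd_A1_mem_Hspace)

lemma cohaMul_mem_genSpan (hg : g ∈ genSpan r) (p : Polynomial ℚ) :
    cohaMul A1 (fun _ => r) oneDim g (Polynomial.aeval (X (0, 0)) p) ∈ genSpan (r + 1) := by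
  have hp : Polynomial.aeval (X (0, 0)) p ∈ Hspace oneDim := aeval_X_mem_Hspace rfl p
  induction hg using Submodule.span_induction with
  | mem _ hx =>
    obtain ⟨f, rfl⟩ := hx
    exact Submodule.subset_span ⟨Fin.snoc f p, by simp [genProd_A1_succ]⟩
  | zero =>
    have hzero := cohaMul_smul_left (γ₁ := fun _ => r) A1 0 (zero_mem _) hp
    rw [zero_smul, zero_smul] at hzero
    rw [hzero]
    exact zero_mem _
  | add x y hx hy ihx ihy =>
    rw [cohaMul_add_left A1 (genSpan_le_Hspace r hx) (genSpan_le_Hspace r hy) hp]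
    exact add_mem ihx ihy
  | smul c x hx ihx =>
    rw [cohaMul_smul_left A1 c (genSpan_le_Hspace r hx) hp]
    exact Submodule.smul_mem _ c ihx

lemma Hspace_zero_le_span_one : Hspace (0 : Fin n → ℕ) ≤ Submodule.span ℚ {1} := by
  intro h hh
  have hvars : h ∈ supported ℚ (∅ : Set (Fin n × ℕ)) :=
    mem_supported.2 fun p hp => absurd (hh.1 p hp) (Nat.not_lt_zero _)
  rw [supported_empty, Algebra.mem_bot] at hvars
  obtain ⟨c, rfl⟩ := hvars
  exact Submodule.mem_span_singleton.2 ⟨c, (Algebra.algebraMap_eq_smul_one c).symm⟩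

lemma genSpan_eq_Hspace (r : ℕ) : genSpan r = Hspace fun _ => r := by
  refine (genSpan_le_Hspace r).antisymm ?_
  induction r with
  | zero =>
    refine (Hspace_zero_le_span_one (n := 1)).trans (Submodule.span_mono ?_)
    exact Set.singleton_subset_iff.2 ⟨Fin.elim0, genProd_zero A1 oneDim 0 _⟩
  | succ r ih =>
    intro h hh
    rw [← sum_cohaMul_coeff_splitLast hh]
    refine sum_mem fun k _ => ?_
    simpa using cohaMul_mem_genSpan (ih (coeff_splitLast_mem_Hspace hh k))
      (Polynomial.X ^ (k + r))

lemma FinQuiver.IsDynkinRoot.map_vertexEmbed_Hspace {Q : FinQuiver n} {β : Fin n → ℕ}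
    {i : Fin n} (hβ : Q.IsDynkinRoot β) (hi : β i = 1) (r : ℕ) :
    (Hspace fun _ => r).map (vertexEmbed i).toLinearMap =
      Submodule.span ℚ {g | ∃ f : Fin r → Polynomial ℚ, g = genProd Q β i f} := by
  rw [← genSpan_eq_Hspace, genSpan, Submodule.map_span, ← Set.range_comp]
  congr 1
  ext g
  simp only [Set.mem_range, Function.comp_apply, Set.mem_ofPred_eq, AlgHom.toLinearMap_apply,
    ← hβ.genProd_eq_vertexEmbed hi, eq_comm]

end Generation

theorem coha_pos_root_eq_A1_general (Q : FinQuiver n) (β : Fin n → ℕ) (hβ : Q.IsDynkinRoot β)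
    (i : Fin n) (hi : β i = 1) :
    (∀ (r : ℕ) (f : Fin r → Polynomial ℚ),
      (∀ p ∈ (genProd Q β i f).vars, p.1 = i ∧ p.2 < r) ∧
      genProd Q β i f = vertexEmbed i (genProd A1 oneDim 0 f)) ∧
    Function.Injective (vertexEmbed i) ∧
    (∀ (r s : ℕ) (g₁ g₂ : PolyQ 1), g₁ ∈ Hspace (fun _ => r) → g₂ ∈ Hspace (fun _ => s) →
      vertexEmbed i (cohaMul A1 (fun _ => r) (fun _ => s) g₁ g₂) =
        cohaMul Q (r • β) (s • β) (vertexEmbed i g₁) (vertexEmbed i g₂)) ∧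
    (∀ r : ℕ, Submodule.map (vertexEmbed i).toLinearMap (Hspace fun _ => r) =
      Submodule.span ℚ {g | ∃ f : Fin r → Polynomial ℚ, g = genProd Q β i f}) :=
  ⟨fun _ f => ⟨fun _ => hβ.mem_vars_genProd hi f, hβ.genProd_eq_vertexEmbed hi f⟩,
    vertexEmbed_injective i, fun _ _ _ _ => hβ.vertexEmbed_cohaMul hi,
    hβ.map_vertexEmbed_Hspace hi⟩

/-- Let `Q'` be a full connected Dynkin subquiver of the acyclic
quiver `Q`, `β` a positive root of `Q'`, and `i` a vertex with `β i = 1`.  The `r`-fold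
left-to-right CoHA product of elements `f_u(ω_{i,1}) ∈ ℋ_β` depends only on the
variables `ω_{i,1},…,ω_{i,r}` and equals the `ℋ(A₁)`-product `f₁(x₁) * ⋯ * f_r(x₁)`
under the substitution `x_b ↦ ω_{i,b}`.  Consequently the subalgebra `𝒜_β` generated
under `*` by `{f(ω_{i,1})} ⊆ ℋ_β` is isomorphic as an algebra to `ℋ(A₁)`: the
substitution is injective, intertwines the products on graded pieces, and carries
`ℋ_r(A₁)` onto the span of the `r`-fold products of generators. -/
theorem coha_pos_root_eq_A1 {n : ℕ} (Q : FinQuiver n) (hQ : Q.Acyclic)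
    (Q' : Subquiver Q) (hD : Q'.IsDynkin)
    (β : Fin n → ℕ) (hβ : Q'.IsPosRoot β) (i : Fin n) (hi : β i = 1) :
    (∀ (r : ℕ) (f : Fin r → Polynomial ℚ),
      (∀ p ∈ (cohaProdFin Q (fun _ => β)
          (fun u => Polynomial.aeval (X (i, 0) : PolyQ n) (f u))).vars,
          p.1 = i ∧ p.2 < r) ∧
      cohaProdFin Q (fun _ => β)
          (fun u => Polynomial.aeval (X (i, 0) : PolyQ n) (f u)) =
        rename (fun p : Fin 1 × ℕ => (i, p.2))
          (cohaProdFin A1 (fun _ => oneDim)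
            (fun u => Polynomial.aeval (X ((0 : Fin 1), 0) : PolyQ 1) (f u)))) ∧
    Function.Injective (rename (fun p : Fin 1 × ℕ => (i, p.2)) : PolyQ 1 → PolyQ n) ∧
    (∀ (r s : ℕ) (g₁ g₂ : PolyQ 1), g₁ ∈ Hspace (fun _ => r) → g₂ ∈ Hspace (fun _ => s) →
      rename (fun p : Fin 1 × ℕ => (i, p.2)) (cohaMul A1 (fun _ => r) (fun _ => s) g₁ g₂) =
        cohaMul Q (fun v => r * β v) (fun v => s * β v)
          (rename (fun p : Fin 1 × ℕ => (i, p.2)) g₁)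
          (rename (fun p : Fin 1 × ℕ => (i, p.2)) g₂)) ∧
    (∀ r : ℕ,
      Submodule.map
          (rename (fun p : Fin 1 × ℕ => (i, p.2)) : PolyQ 1 →ₐ[ℚ] PolyQ n).toLinearMap
          (Hspace (fun _ => r)) =
        Submodule.span ℚ {g : PolyQ n | ∃ f : Fin r → Polynomial ℚ,
          g = cohaProdFin Q (fun _ => β)
            (fun u => Polynomial.aeval (X (i, 0) : PolyQ n) (f u))}) :=
  coha_pos_root_eq_A1_general Q β (hβ.isDynkinRoot hD.2.1 hD.2.2) i hi
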